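/- arXiv:math/0508421 — 2 statements merged into one kernel-verified Lean document; each statement's English description precedes it below -/
import Mathlib

section
/- For every binary quintic F over ℂ, B₅(F) = (5¹⁵/(2¹⁵·3¹⁵))·(3³·K³ − 3³·K²J² + 3²·K·J⁴ − J⁶), where J = J(F), K = K(F). -/
/-!
The constant term of `R̄` is `-(∏ᵢ S(Qᵢ))³`, and the right-hand side is `-(5/6)¹⁵ (J² - 3K)³`, so it
suffices to prove the identity `∏ᵢ S(Qᵢ) = (5/6)⁵ (J² - 3K)` of degree `8` in the quintic
(`prod_quarticS`).

Both sides are invariant under unimodular substitutions of the roots. For the left-hand side this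
holds because `24 S(Q)` is the sum of the three products of squared brackets
`(λ₁λ₂)²(λ₃λ₄)²`, `(λ₁λ₃)²(λ₂λ₄)²`, `(λ₁λ₄)²(λ₂λ₃)²` (`Sq_lin`). For the right-hand
side, `J` and `K` are written in terms of the binomially normalized coefficients of the covariants `C₁, C₂, C₃`, whose behaviour under
a shear and under the quarter turn `(b₁,b₂) ↦ (b₂,-b₁)` is checked one covariant at a time.
A shear and a quarter turn bring `λ₅` to the form `(p,0)`, and a second shear brings `λ₄` to the form
`(0,q)`, unless `λ₄` is already proportional to `λ₅`. In both normal forms the identity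
is a polynomial identity in few variables, checked by expansion.
-/

noncomputable section

open MvPolynomial

abbrev P2 := MvPolynomial (Fin 2) ℂ

/-- The bracket `(bc) = b₁c₂ − b₂c₁` of two points of `ℂ²`. -/
def br (b c : Fin 2 → ℂ) : ℂ := b 0 * c 1 - b 1 * c 0

/-- The linear binary form `(xλ) = x₁λ₂ − x₂λ₁` with homogeneous root `λ`. -/
def lin (l : Fin 2 → ℂ) : P2 := C (l 1) * X 0 - C (l 0) * X 1

/-- The binary quintic with homogeneous roots `λ₁,…,λ₅`. -/
def quinticOf (l : Fin 5 → Fin 2 → ℂ) : P2 := ∏ i, lin (l i)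

/-- The binary quartic obtained from the quintic with roots `λ₁,…,λ₅` by
omitting the `i`-th factor. -/
def quarticOmit (l : Fin 5 → Fin 2 → ℂ) (i : Fin 5) : P2 :=
  ∏ j ∈ Finset.univ.erase i, lin (l j)

/-- The binary quartic with homogeneous roots `ξ₁,…,ξ₄`. -/
def quarticOf (l : Fin 4 → Fin 2 → ℂ) : P2 := ∏ i, lin (l i)

/-- The coefficient of `x₁^i x₂^j` in a binary form. -/
def mcoeff (i j : ℕ) (F : P2) : ℂ :=
  MvPolynomial.coeff (Finsupp.single 0 i + Finsupp.single 1 j) F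

/-- The invariant `S = q₀q₄ − 4q₁q₃ + 3q₂²` of a binary quartic
`Q = q₀x₁⁴ + 4q₁x₁³x₂ + 6q₂x₁²x₂² + 4q₃x₁x₂³ + q₄x₂⁴`. -/
def Sq (Q : P2) : ℂ :=
  mcoeff 4 0 Q * mcoeff 0 4 Q - 4 * (mcoeff 3 1 Q / 4) * (mcoeff 1 3 Q / 4)
    + 3 * (mcoeff 2 2 Q / 6) ^ 2

/-- The invariant `T = q₀q₂q₄ + 2q₁q₂q₃ − q₂³ − q₀q₃² − q₁²q₄` of a binary quartic. -/
def Tq (Q : P2) : ℂ :=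
  mcoeff 4 0 Q * (mcoeff 2 2 Q / 6) * mcoeff 0 4 Q
    + 2 * (mcoeff 3 1 Q / 4) * (mcoeff 2 2 Q / 6) * (mcoeff 1 3 Q / 4)
    - (mcoeff 2 2 Q / 6) ^ 3 - mcoeff 4 0 Q * (mcoeff 1 3 Q / 4) ^ 2
    - (mcoeff 3 1 Q / 4) ^ 2 * mcoeff 0 4 Q

/-- The quintic `R̄ = ∏ᵢ ((S(Qᵢ)³ − 27T(Qᵢ)²)z − S(Qᵢ)³)` in the variable `z`. -/
def Rbar (l : Fin 5 → Fin 2 → ℂ) : Polynomial ℂ :=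
  ∏ i : Fin 5,
    (Polynomial.C (Sq (quarticOmit l i) ^ 3 - 27 * Tq (quarticOmit l i) ^ 2) * Polynomial.X
      - Polynomial.C (Sq (quarticOmit l i) ^ 3))

/-- The invariant `Bᵢ`, defined by `R̄ = Σᵢ Bᵢ z^(5−i)`. -/
def Binv (l : Fin 5 → Fin 2 → ℂ) (i : ℕ) : ℂ := (Rbar l).coeff (5 - i)

/-- Partial derivative of a binary form. -/
def pd (i : Fin 2) (F : P2) : P2 := MvPolynomial.pderiv i F

/-- The `k`-th transvectant of binary forms `F`, `G` of orders `p`, `q`. -/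
def transv (p q k : ℕ) (F G : P2) : P2 :=
  C ((Nat.factorial (p - k) * Nat.factorial (q - k) : ℂ)
      / (Nat.factorial p * Nat.factorial q)) *
  ∑ i ∈ Finset.range (k + 1),
    C ((-1 : ℂ) ^ i * (Nat.choose k i : ℂ)) *
      ((pd 1)^[i] ((pd 0)^[k - i] F)) * ((pd 0)^[i] ((pd 1)^[k - i] G))

/-- The covariant `C₁ = (F,F)₄` of a binary quintic. -/
def cov1 (F : P2) : P2 := transv 5 5 4 F F
/-- The covariant `C₂ = (F,C₁)₂` of a binary quintic. -/
def cov2 (F : P2) : P2 := transv 5 2 2 F (cov1 F)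
/-- The covariant `C₃ = (C₂,C₂)₂` of a binary quintic. -/
def cov3 (F : P2) : P2 := transv 3 3 2 (cov2 F) (cov2 F)
/-- The covariant `C₄ = (C₂,C₁)₂` of a binary quintic. -/
def cov4 (F : P2) : P2 := transv 3 2 2 (cov2 F) (cov1 F)

/-- The degree `4` invariant `J = −½(C₁,C₁)₂` of a binary quintic. -/
def Jinv (F : P2) : ℂ := -(1/2) * constantCoeff (transv 2 2 2 (cov1 F) (cov1 F))
/-- The degree `8` invariant `K = ⅛(C₁,C₃)₂` of a binary quintic. -/
def Kinv (F : P2) : ℂ := (1/8) * constantCoeff (transv 2 2 2 (cov1 F) (cov3 F))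
/-- The degree `12` invariant `L = (1/96)(C₃,C₃)₂` of a binary quintic. -/
def Linv (F : P2) : ℂ := (1/96) * constantCoeff (transv 2 2 2 (cov3 F) (cov3 F))
/-- The degree `18` invariant `H = −(1/384)((C₄,C₃)₁,(C₁,C₄)₁)₁` of a binary quintic. -/
def Hinv (F : P2) : ℂ :=
  -(1/384) *
    constantCoeff (transv 1 1 1 (transv 1 2 1 (cov4 F) (cov3 F)) (transv 2 1 1 (cov1 F) (cov4 F)))

/-- The coefficients `a₀,…,a₅` of a binary quintic `F = Σ aᵢ x₁^(5−i) x₂^i`. -/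
def qcoeffs (F : P2) : Fin 6 → ℂ := fun i => mcoeff (5 - (i : ℕ)) (i : ℕ) F

/-- The binary quintic with coefficients `a₀,…,a₅`. -/
def formOf (a : Fin 6 → ℂ) : P2 := ∑ i : Fin 6, C (a i) * X 0 ^ (5 - (i : ℕ)) * X 1 ^ (i : ℕ)

/-- The `GL₂(ℂ)` action on binary forms, `(gF)(x) = F(g⁻¹x)`. -/
def act (g : Matrix.GeneralLinearGroup (Fin 2) ℂ) (F : P2) : P2 :=
  aeval (fun i => ∑ j,
    C (((g⁻¹ : Matrix.GeneralLinearGroup (Fin 2) ℂ) : Matrix (Fin 2) (Fin 2) ℂ) i j) * X j) F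

/-- The `SL₂(ℂ)` action on binary forms, `(gF)(x) = F(g⁻¹x)`. -/
def actSL (g : Matrix.SpecialLinearGroup (Fin 2) ℂ) (F : P2) : P2 :=
  aeval (fun i => ∑ j,
    C (((g⁻¹ : Matrix.SpecialLinearGroup (Fin 2) ℂ) : Matrix (Fin 2) (Fin 2) ℂ) i j) * X j) F

/-- `P` (a polynomial in the coefficients `a₀,…,a₅` of a binary quintic) is an
`SL₂(ℂ)`-invariant: `P(gF) = P(F)` for all `g ∈ SL₂(ℂ)`. -/
def IsInvariantPoly (P : MvPolynomial (Fin 6) ℂ) : Prop :=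
  ∀ (g : Matrix.SpecialLinearGroup (Fin 2) ℂ) (a : Fin 6 → ℂ),
    MvPolynomial.eval (qcoeffs (actSL g (formOf a))) P = MvPolynomial.eval a P

/-- The discriminant `∏_{i<j} (λᵢλⱼ)²` of a binary quintic with roots `λ₁,…,λ₅`. -/
def disc5 (l : Fin 5 → Fin 2 → ℂ) : ℂ := ∏ i, ∏ j ∈ Finset.Ioi i, br (l i) (l j) ^ 2

/-- The discriminant `∏_{i<j} (ξᵢξⱼ)²` of a binary quartic with roots `ξ₁,…,ξ₄`. -/
def disc4 (l : Fin 4 → Fin 2 → ℂ) : ℂ := ∏ i, ∏ j ∈ Finset.Ioi i, br (l i) (l j) ^ 2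

/-- The Sylvester canonical form `u x₁⁵ + v x₂⁵ − w (x₁+x₂)⁵`. -/
def sylvester (u v w : ℂ) : P2 := C u * X 0 ^ 5 + C v * X 1 ^ 5 - C w * (X 0 + X 1) ^ 5

/-- The submodule of `SL₂(ℂ)`-invariant polynomials in the coefficients of the
binary quintic. -/
def invariantSubmodule : Submodule ℂ (MvPolynomial (Fin 6) ℂ) :=
  ⨅ (g : Matrix.SpecialLinearGroup (Fin 2) ℂ), ⨅ (a : Fin 6 → ℂ),
    LinearMap.ker
      ((aeval (R := ℂ) (qcoeffs (actSL g (formOf a)))).toLinearMap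
        - (aeval (R := ℂ) a).toLinearMap)



/-! ### Binary forms as sums of monomials -/

/-- The monomial `c x₁^a x₂^b`. -/
def mono (a b : ℕ) (c : ℂ) : P2 := C c * X 0 ^ a * X 1 ^ b

lemma pd_zero_mono (a b : ℕ) (c : ℂ) : pd 0 (mono a b c) = mono (a - 1) b (a * c) := by
  simp [pd, mono, pderiv_X, Derivation.leibniz_pow]
  ring

lemma pd_one_mono (a b : ℕ) (c : ℂ) : pd 1 (mono a b c) = mono a (b - 1) (b * c) := by
  simp [pd, mono, pderiv_X, Derivation.leibniz_pow]
  ring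

lemma pd_add (i : Fin 2) (F G : P2) : pd i (F + G) = pd i F + pd i G := by
  simp [pd]

lemma mcoeff_mono (i j a b : ℕ) (c : ℂ) :
    mcoeff i j (mono a b c) = if a = i ∧ b = j then c else 0 := by
  have h : mono a b c = monomial (Finsupp.single 0 a + Finsupp.single 1 b) c := by
    rw [monomial_eq]
    simp [mono, mul_assoc, Finsupp.prod_add_index', Finsupp.prod_single_index, pow_add]
  rw [mcoeff, h, coeff_monomial]
  refine if_congr ⟨fun e => ?_, fun e => by rw [e.1, e.2]⟩ rfl rfl
  have e0 := DFunLike.congr_fun e 0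
  have e1 := DFunLike.congr_fun e 1
  simp at e0 e1
  exact ⟨e0, e1⟩

lemma mcoeff_add (i j : ℕ) (F G : P2) : mcoeff i j (F + G) = mcoeff i j F + mcoeff i j G := by
  simp [mcoeff]

/-- The binary quadratic with binomially normalized coefficients `a, b, c`. -/
def form2 (a b c : ℂ) : P2 := mono 2 0 a + mono 1 1 (2 * b) + mono 0 2 c

/-- The binary cubic with binomially normalized coefficients `f 0, …, f 3`. -/
def form3 (f : ℕ → ℂ) : P2 :=
  mono 3 0 (f 0) + mono 2 1 (3 * f 1) + mono 1 2 (3 * f 2) + mono 0 3 (f 3)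

/-- The binary quintic with binomially normalized coefficients `f 0, …, f 5`. -/
def form5 (f : ℕ → ℂ) : P2 :=
  mono 5 0 (f 0) + mono 4 1 (5 * f 1) + mono 3 2 (10 * f 2) + mono 2 3 (10 * f 3)
    + mono 1 4 (5 * f 4) + mono 0 5 (f 5)

/-! ### The covariants in coordinates -/

/-- First normalized coefficient of `C₁`. -/
def c1a (f : ℕ → ℂ) : ℂ := 2 * (f 0 * f 4 - 4 * f 1 * f 3 + 3 * f 2 ^ 2)
/-- Second normalized coefficient of `C₁`. -/
def c1b (f : ℕ → ℂ) : ℂ := f 0 * f 5 - 3 * f 1 * f 4 + 2 * f 2 * f 3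
/-- Third normalized coefficient of `C₁`. -/
def c1c (f : ℕ → ℂ) : ℂ := 2 * (f 1 * f 5 - 4 * f 2 * f 4 + 3 * f 3 ^ 2)

/-- Normalized coefficients of `C₂`; only the indices `0, …, 3` are meaningful. -/
def c2 (f : ℕ → ℂ) (k : ℕ) : ℂ := f k * c1c f - 2 * f (k + 1) * c1b f + f (k + 2) * c1a f

/-- First normalized coefficient of `C₃`. -/
def c3a (f : ℕ → ℂ) : ℂ := 2 * (c2 f 0 * c2 f 2 - c2 f 1 ^ 2)
/-- Second normalized coefficient of `C₃`. -/
def c3b (f : ℕ → ℂ) : ℂ := c2 f 0 * c2 f 3 - c2 f 1 * c2 f 2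
/-- Third normalized coefficient of `C₃`. -/
def c3c (f : ℕ → ℂ) : ℂ := 2 * (c2 f 1 * c2 f 3 - c2 f 2 ^ 2)

/-- The invariant `J` as a polynomial in the normalized coefficients. -/
def jPoly (f : ℕ → ℂ) : ℂ := c1b f ^ 2 - c1a f * c1c f

/-- The invariant `K` as a polynomial in the normalized coefficients. -/
def kPoly (f : ℕ → ℂ) : ℂ := (c1a f * c3c f - 2 * c1b f * c3b f + c1c f * c3a f) / 8

/-- Clears the rational factor of a transvectant: a constant `C (1 / n)` can be cancelled. -/
lemma C_one_div_mul {n : ℂ} (hn : n ≠ 0) {F G : P2} (h : F = C n * G) : C (1 / n) * F = G := by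
  rw [h, ← mul_assoc, ← C_mul, one_div_mul_cancel hn, C_1, one_mul]

lemma cov1_form5 (f : ℕ → ℂ) : cov1 (form5 f) = form2 (c1a f) (c1b f) (c1c f) := by
  simp only [cov1, transv, form5, form2, Finset.sum_range_succ, Finset.sum_range_zero, pd_add,
    pd_zero_mono, pd_one_mono, Function.iterate_succ, Function.iterate_zero, Function.comp, id,
    Nat.sub_self, Nat.reduceSub]
  norm_num only [Nat.factorial, Nat.choose]
  refine C_one_div_mul (by norm_num) ?_
  simp [mono, c1a, c1b, c1c, map_ofNat]
  ring

lemma transv_five_two (f : ℕ → ℂ) (a b c : ℂ) :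
    transv 5 2 2 (form5 f) (form2 a b c)
      = form3 fun k => f k * c - 2 * f (k + 1) * b + f (k + 2) * a := by
  simp only [transv, form5, form2, form3, Finset.sum_range_succ, Finset.sum_range_zero, pd_add,
    pd_zero_mono, pd_one_mono, Function.iterate_succ, Function.iterate_zero, Function.comp, id,
    Nat.sub_self, Nat.reduceSub]
  norm_num only [Nat.factorial, Nat.choose]
  refine C_one_div_mul (by norm_num) ?_
  simp [mono, map_ofNat]
  ring

lemma transv_three_three (f : ℕ → ℂ) :
    transv 3 3 2 (form3 f) (form3 f)
      = form2 (2 * (f 0 * f 2 - f 1 ^ 2)) (f 0 * f 3 - f 1 * f 2) (2 * (f 1 * f 3 - f 2 ^ 2)) := by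
  simp only [transv, form2, form3, Finset.sum_range_succ, Finset.sum_range_zero, pd_add,
    pd_zero_mono, pd_one_mono, Function.iterate_succ, Function.iterate_zero, Function.comp, id,
    Nat.sub_self, Nat.reduceSub]
  norm_num only [Nat.factorial, Nat.choose]
  refine C_one_div_mul (by norm_num) ?_
  simp [mono, map_ofNat]
  ring

lemma transv_two_two (a b c a' b' c' : ℂ) :
    transv 2 2 2 (form2 a b c) (form2 a' b' c') = C (a * c' - 2 * b * b' + c * a') := by
  simp only [transv, form2, Finset.sum_range_succ, Finset.sum_range_zero, pd_add,
    pd_zero_mono, pd_one_mono, Function.iterate_succ, Function.iterate_zero, Function.comp, id,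
    Nat.sub_self, Nat.reduceSub]
  norm_num only [Nat.factorial, Nat.choose]
  refine C_one_div_mul (by norm_num) ?_
  simp [mono, map_ofNat]
  ring

lemma cov3_form5 (f : ℕ → ℂ) : cov3 (form5 f) = form2 (c3a f) (c3b f) (c3c f) := by
  rw [cov3, cov2, cov1_form5, transv_five_two, transv_three_three]
  rfl

lemma Jinv_form5 (f : ℕ → ℂ) : Jinv (form5 f) = jPoly f := by
  rw [Jinv, cov1_form5, transv_two_two, constantCoeff_C, jPoly]
  ring

lemma Kinv_form5 (f : ℕ → ℂ) : Kinv (form5 f) = kPoly f := by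
  rw [Kinv, cov1_form5, cov3_form5, transv_two_two, constantCoeff_C, kPoly]
  ring

/-! ### Behaviour of `J` and `K` under a shear and a quarter turn -/

/-- The action on normalized coefficients of the substitution `x₁ ↦ x₁ - t x₂`. -/
def shearCoeff (t : ℂ) (f : ℕ → ℂ) (k : ℕ) : ℂ :=
  ∑ j ∈ Finset.range (k + 1), (k.choose j : ℂ) * (-t) ^ j * f (k - j)

section Shear

variable (t : ℂ) (f : ℕ → ℂ)

lemma c1a_shear : c1a (shearCoeff t f) = c1a f := by
  simp [c1a, shearCoeff, Finset.sum_range_succ, Nat.choose]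
  ring

lemma c1b_shear : c1b (shearCoeff t f) = c1b f - t * c1a f := by
  simp [c1a, c1b, shearCoeff, Finset.sum_range_succ, Nat.choose]
  ring

lemma c1c_shear : c1c (shearCoeff t f) = c1c f - 2 * t * c1b f + t ^ 2 * c1a f := by
  simp [c1a, c1b, c1c, shearCoeff, Finset.sum_range_succ, Nat.choose]
  ring

lemma c2_zero_shear : c2 (shearCoeff t f) 0 = c2 f 0 := by
  simp [c2, c1a_shear, c1b_shear, c1c_shear]
  simp [shearCoeff, Finset.sum_range_succ, Nat.choose]
  ring

lemma c2_one_shear : c2 (shearCoeff t f) 1 = c2 f 1 - t * c2 f 0 := by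
  simp [c2, c1a_shear, c1b_shear, c1c_shear]
  simp [shearCoeff, Finset.sum_range_succ, Nat.choose]
  ring

lemma c2_two_shear : c2 (shearCoeff t f) 2 = c2 f 2 - 2 * t * c2 f 1 + t ^ 2 * c2 f 0 := by
  simp [c2, c1a_shear, c1b_shear, c1c_shear]
  simp [shearCoeff, Finset.sum_range_succ, Nat.choose]
  ring

lemma c2_three_shear : c2 (shearCoeff t f) 3
    = c2 f 3 - 3 * t * c2 f 2 + 3 * t ^ 2 * c2 f 1 - t ^ 3 * c2 f 0 := by
  simp [c2, c1a_shear, c1b_shear, c1c_shear]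
  simp [shearCoeff, Finset.sum_range_succ, Nat.choose]
  ring

lemma jPoly_shear : jPoly (shearCoeff t f) = jPoly f := by
  simp only [jPoly, c1a_shear, c1b_shear, c1c_shear]
  ring

lemma kPoly_shear : kPoly (shearCoeff t f) = kPoly f := by
  simp only [kPoly, c3a, c3b, c3c, c1a_shear, c1b_shear, c1c_shear, c2_zero_shear, c2_one_shear,
    c2_two_shear, c2_three_shear]
  ring

end Shear

/-- The action on normalized coefficients of quintics of the quarter turn
`(x₁, x₂) ↦ (-x₂, x₁)`. -/
def turnCoeff (f : ℕ → ℂ) (k : ℕ) : ℂ := (-1) ^ k * f (5 - k)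

lemma jPoly_turn (f : ℕ → ℂ) : jPoly (turnCoeff f) = jPoly f := by
  simp [jPoly, c1a, c1b, c1c, turnCoeff]
  ring

lemma kPoly_turn (f : ℕ → ℂ) : kPoly (turnCoeff f) = kPoly f := by
  have ha : c1a (turnCoeff f) = c1c f := by simp [c1a, c1c, turnCoeff]; ring
  have hb : c1b (turnCoeff f) = -c1b f := by simp [c1b, turnCoeff]; ring
  have hc : c1c (turnCoeff f) = c1a f := by simp [c1a, c1c, turnCoeff]; ring
  have h0 : c2 (turnCoeff f) 0 = c2 f 3 := by simp [c2, ha, hb, hc]; simp [turnCoeff]; ring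
  have h1 : c2 (turnCoeff f) 1 = -c2 f 2 := by simp [c2, ha, hb, hc]; simp [turnCoeff]; ring
  have h2 : c2 (turnCoeff f) 2 = c2 f 1 := by simp [c2, ha, hb, hc]; simp [turnCoeff]; ring
  have h3 : c2 (turnCoeff f) 3 = -c2 f 0 := by simp [c2, ha, hb, hc]; simp [turnCoeff]; ring
  simp only [kPoly, c3a, c3b, c3c, ha, hb, hc, h0, h1, h2, h3]
  ring

/-! ### Forms in terms of their roots -/

/-- The coefficient of `x₁^(4-k) x₂^k` in the quartic with roots `u, v, w, z`. -/
def quarticCoeff (u v w z : Fin 2 → ℂ) : ℕ → ℂ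
  | 0 => u 1 * v 1 * w 1 * z 1
  | 1 => -(u 0 * v 1 * w 1 * z 1 + u 1 * v 0 * w 1 * z 1 + u 1 * v 1 * w 0 * z 1
      + u 1 * v 1 * w 1 * z 0)
  | 2 => u 0 * v 0 * w 1 * z 1 + u 0 * v 1 * w 0 * z 1 + u 0 * v 1 * w 1 * z 0
      + u 1 * v 0 * w 0 * z 1 + u 1 * v 0 * w 1 * z 0 + u 1 * v 1 * w 0 * z 0
  | 3 => -(u 1 * v 0 * w 0 * z 0 + u 0 * v 1 * w 0 * z 0 + u 0 * v 0 * w 1 * z 0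
      + u 0 * v 0 * w 0 * z 1)
  | 4 => u 0 * v 0 * w 0 * z 0
  | _ => 0

lemma lin_mul_four (u v w z : Fin 2 → ℂ) :
    lin u * lin v * lin w * lin z
      = mono 4 0 (quarticCoeff u v w z 0) + mono 3 1 (quarticCoeff u v w z 1)
        + mono 2 2 (quarticCoeff u v w z 2) + mono 1 3 (quarticCoeff u v w z 3)
        + mono 0 4 (quarticCoeff u v w z 4) := by
  simp [lin, mono, quarticCoeff]
  ring

/-- The invariant `S` of the quartic with roots `u, v, w, z`, in terms of brackets. -/
def quarticS (u v w z : Fin 2 → ℂ) : ℂ :=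
  (br u v ^ 2 * br w z ^ 2 + br u w ^ 2 * br v z ^ 2 + br u z ^ 2 * br v w ^ 2) / 24

lemma Sq_lin (u v w z : Fin 2 → ℂ) :
    Sq (lin u * lin v * lin w * lin z) = quarticS u v w z := by
  simp only [Sq, lin_mul_four, mcoeff_add, mcoeff_mono]
  norm_num [quarticCoeff, quarticS, br]
  ring

/-- The normalized coefficients of the quintic with roots `u, v, w, z, y`. -/
def quinticCoeff (u v w z y : Fin 2 → ℂ) : ℕ → ℂ
  | 0 => y 1 * quarticCoeff u v w z 0
  | 1 => (y 1 * quarticCoeff u v w z 1 - y 0 * quarticCoeff u v w z 0) / 5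
  | 2 => (y 1 * quarticCoeff u v w z 2 - y 0 * quarticCoeff u v w z 1) / 10
  | 3 => (y 1 * quarticCoeff u v w z 3 - y 0 * quarticCoeff u v w z 2) / 10
  | 4 => (y 1 * quarticCoeff u v w z 4 - y 0 * quarticCoeff u v w z 3) / 5
  | 5 => -(y 0 * quarticCoeff u v w z 4)
  | _ => 0

lemma lin_mul_five (u v w z y : Fin 2 → ℂ) :
    lin u * lin v * lin w * lin z * lin y = form5 (quinticCoeff u v w z y) := by
  rw [lin_mul_four]
  simp only [form5, quinticCoeff, mul_div_cancel₀ _ (show (5 : ℂ) ≠ 0 by norm_num),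
    mul_div_cancel₀ _ (show (10 : ℂ) ≠ 0 by norm_num)]
  generalize quarticCoeff u v w z = b
  simp [lin, mono]
  ring

/-- The shear `(v₁, v₂) ↦ (v₁ + t v₂, v₂)` of a root. -/
def shear (t : ℂ) (v : Fin 2 → ℂ) : Fin 2 → ℂ := ![v 0 + t * v 1, v 1]

/-- The quarter turn `(v₁, v₂) ↦ (v₂, -v₁)` of a root. -/
def turn (v : Fin 2 → ℂ) : Fin 2 → ℂ := ![v 1, -v 0]

lemma br_shear (t : ℂ) (u v : Fin 2 → ℂ) : br (shear t u) (shear t v) = br u v := by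
  simp [br, shear]
  ring

lemma br_turn (u v : Fin 2 → ℂ) : br (turn u) (turn v) = br u v := by
  simp [br, turn]
  ring

/-- The degree `8` identity for the quintic with roots `u, v, w, z, y`. -/
def DegreeEight (u v w z y : Fin 2 → ℂ) : Prop :=
  quarticS v w z y * quarticS u w z y * quarticS u v z y * quarticS u v w y * quarticS u v w z
    = (5 / 6) ^ 5 * (jPoly (quinticCoeff u v w z y) ^ 2 - 3 * kPoly (quinticCoeff u v w z y))

/-- Agreement in the indices `0, …, 5` suffices for `J` and `K`. -/
lemma jPoly_kPoly_congr {f g : ℕ → ℂ} (h : ∀ k < 6, f k = g k) :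
    jPoly f = jPoly g ∧ kPoly f = kPoly g := by
  have h0 := h 0 (by norm_num)
  have h1 := h 1 (by norm_num)
  have h2 := h 2 (by norm_num)
  have h3 := h 3 (by norm_num)
  have h4 := h 4 (by norm_num)
  have h5 := h 5 (by norm_num)
  constructor <;>
    simp [jPoly, kPoly, c3a, c3b, c3c, c2, c1a, c1b, c1c, h0, h1, h2, h3, h4, h5]

lemma degreeEight_of_shear (t : ℂ) {u v w z y : Fin 2 → ℂ}
    (h : DegreeEight (shear t u) (shear t v) (shear t w) (shear t z) (shear t y)) :
    DegreeEight u v w z y := by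
  have hc : ∀ k < 6, quinticCoeff (shear t u) (shear t v) (shear t w) (shear t z) (shear t y) k
      = shearCoeff t (quinticCoeff u v w z y) k := by
    intro k hk
    interval_cases k <;>
      simp [quinticCoeff, quarticCoeff, shear, shearCoeff, Finset.sum_range_succ, Nat.choose] <;>
      ring
  obtain ⟨hJ, hK⟩ := jPoly_kPoly_congr hc
  simpa only [DegreeEight, quarticS, br_shear, hJ, hK, jPoly_shear, kPoly_shear] using h

lemma degreeEight_of_turn {u v w z y : Fin 2 → ℂ}
    (h : DegreeEight (turn u) (turn v) (turn w) (turn z) (turn y)) :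
    DegreeEight u v w z y := by
  have hc : ∀ k < 6, quinticCoeff (turn u) (turn v) (turn w) (turn z) (turn y) k
      = turnCoeff (quinticCoeff u v w z y) k := by
    intro k hk
    interval_cases k <;> simp [quinticCoeff, quarticCoeff, turn, turnCoeff] <;> ring
  obtain ⟨hJ, hK⟩ := jPoly_kPoly_congr hc
  simpa only [DegreeEight, quarticS, br_turn, hJ, hK, jPoly_turn, kPoly_turn] using h

/-! ### The identity of degree eight -/

/-- The normal form in which `x₁x₂` divides the quintic. -/
lemma degreeEight_distinct {u v w z y : Fin 2 → ℂ} (hz : z 0 = 0) (hy : y 1 = 0) :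
    DegreeEight u v w z y := by
  simp only [DegreeEight, quarticS, br, jPoly, kPoly, c3a, c3b, c3c, c2, c1a, c1b, c1c,
    quinticCoeff, quarticCoeff, hz, hy, mul_zero, zero_mul, add_zero, zero_add, sub_zero, zero_sub,
    neg_zero]
  ring

/-- The normal form in which `x₂²` divides the quintic. -/
lemma degreeEight_double {u v w z y : Fin 2 → ℂ} (hz : z 1 = 0) (hy : y 1 = 0) :
    DegreeEight u v w z y := by
  simp only [DegreeEight, quarticS, br, jPoly, kPoly, c3a, c3b, c3c, c2, c1a, c1b, c1c,
    quinticCoeff, quarticCoeff, hz, hy, mul_zero, zero_mul, add_zero, zero_add, sub_zero, zero_sub,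
    zero_div]
  ring

lemma degreeEight_of_infinite {u v w z y : Fin 2 → ℂ} (hy : y 1 = 0) :
    DegreeEight u v w z y := by
  by_cases hz : z 1 = 0
  · exact degreeEight_double hz hy
  · refine degreeEight_of_shear (-z 0 / z 1) (degreeEight_distinct ?_ ?_)
    · simp [shear, hz]
    · simpa [shear] using hy

lemma prod_quarticS (u v w z y : Fin 2 → ℂ) : DegreeEight u v w z y := by
  by_cases hy : y 1 = 0
  · exact degreeEight_of_infinite hy
  · refine degreeEight_of_shear (-y 0 / y 1) (degreeEight_of_turn (degreeEight_of_infinite ?_))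
    simp [shear, turn, hy]

/-! ### The invariant `B₅` -/

lemma Binv_five (l : Fin 5 → Fin 2 → ℂ) :
    Binv l 5 = -(∏ i, Sq (quarticOmit l i)) ^ 3 := by
  simp only [Binv, Rbar, Nat.sub_self, Polynomial.coeff_zero_eq_eval_zero,
    Fin.prod_univ_five]
  simp
  ring

lemma prod_Sq_quarticOmit (l : Fin 5 → Fin 2 → ℂ) :
    ∏ i, Sq (quarticOmit l i)
      = (5 / 6) ^ 5 * (Jinv (quinticOf l) ^ 2 - 3 * Kinv (quinticOf l)) := by
  have hF : quinticOf l = form5 (quinticCoeff (l 0) (l 1) (l 2) (l 3) (l 4)) := by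
    rw [quinticOf, Fin.prod_univ_five, lin_mul_five]
  have e0 : (Finset.univ.erase 0 : Finset (Fin 5)) = {1, 2, 3, 4} := by decide
  have e1 : (Finset.univ.erase 1 : Finset (Fin 5)) = {0, 2, 3, 4} := by decide
  have e2 : (Finset.univ.erase 2 : Finset (Fin 5)) = {0, 1, 3, 4} := by decide
  have e3 : (Finset.univ.erase 3 : Finset (Fin 5)) = {0, 1, 2, 4} := by decide
  have e4 : (Finset.univ.erase 4 : Finset (Fin 5)) = {0, 1, 2, 3} := by decide
  rw [hF, Jinv_form5, Kinv_form5, ← prod_quarticS, Fin.prod_univ_five]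
  simp only [quarticOmit, e0, e1, e2, e3, e4]
  simp [← mul_assoc, Sq_lin]

/-- `B₅(F) = (5¹⁵/(2¹⁵·3¹⁵))(3³·K³ − 3³·K²J² + 3²·KJ⁴ − J⁶)`. -/
theorem binv_five_formula (l : Fin 5 → Fin 2 → ℂ) :
    Binv l 5 = 5 ^ 15 / (2 ^ 15 * 3 ^ 15) *
      (3 ^ 3 * Kinv (quinticOf l) ^ 3
        - 3 ^ 3 * Kinv (quinticOf l) ^ 2 * Jinv (quinticOf l) ^ 2
        + 3 ^ 2 * Kinv (quinticOf l) * Jinv (quinticOf l) ^ 4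
        - Jinv (quinticOf l) ^ 6) := by
  rw [Binv_five, prod_Sq_quarticOmit]
  ring

end
end

section
/- The 21 polynomials B_i², 0 ≤ i ≤ 5, and B_i·B_j, 0 ≤ i < j ≤ 5, linearly span the complex vector space of SL₂(ℂ)-invariant homogeneous polynomials of degree 48 in the coefficients a₀,…,a₅ of the binary quintic. -/
/-!
Classically, the invariants of the binary quintic whose degree is divisible by `4` are the
polynomials in invariants `J`, `K`, `L` of degrees `4`, `8`, `12`. In degree `24` there are seven
monomials in `J`, `K`, `L`, the `B_k` span a hyperplane of their span, and the products of elements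
of this hyperplane fill degree `48`.

Generation by `J`, `K`, `L` is proved in degree `48` through Sylvester's canonical form. A general
quintic is a sum of three fifth powers `Σ c_k u_k⁵` (`exists_momSum`). On such sums an invariant is,
up to a power of `e₃ = U₀U₁U₂`, a symmetric polynomial in the three quantities
`U_k = c_i c_j (u_i u_j)⁵` (`eval_sylv_Uvec`, `exists_esymm_poly`), hence a polynomial in
`J = e₁² - 4e₂`, `K = e₁e₃`, `e₃` divided by a power of `e₃`. The denominator is removed by a family
of quintics degenerating to `e₃ = 0` (`descent`), and odd powers of `e₃` are excluded by a sign
symmetry, so that `J`, `K` and `L = e₃²` suffice (`exists_JKL`). Homogeneity leaves the monomials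
`J^i K^j L^k` with `i + 2j + 3k = 12` (`exists_JKL_homogeneous`).

The `B_k` are expressed through brackets of the roots (`Sq_lin`, `Tq_lin`, `Binv_eq`). For quintics
with roots `∞, 0, x, y, z`, polynomial identities in the elementary symmetric functions of `x, y, z`
write each `B_k` as an explicit combination of the seven monomials `J⁶`, `J⁴K`, `J²K²`, `K³`, `J³L`,
`JKL`, `L²` (`slice0`, …, `slice5`). The span of the `B_k` contains `m + r_m L²` for each of the
first six monomials `m`. Syzygies among these monomials, such as `J⁶ · J²K² = (J⁴K)²`, yield enough
linear relations to place every `m L²` in the span of the products, and then every monomial of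
degree `48` (`monomial_mem_mul`). This settles quintics with roots `∞, 0, x, y, z`.

The group `SL₂(ℂ)` together with rescaling of the roots carries every quintic whose first root
differs from the others to that shape, both sides being multiplied by `(∏ t_i)⁴⁸`
(`exists_generic`). The remaining root configurations follow by continuity.
-/

noncomputable section

open MvPolynomial

/-! ### Coefficients of forms and sums of fifth powers -/

lemma X_pow_mul_eq (c : ℂ) (i j : ℕ) :
    (C c * X 0 ^ i * X 1 ^ j : P2) =
      monomial (Finsupp.single 0 i + Finsupp.single 1 j) c := by
  rw [X_pow_eq_monomial, X_pow_eq_monomial, mul_assoc, monomial_mul, C_mul_monomial]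
  simp

lemma exponent_eq_iff (i j i' j' : ℕ) :
    (Finsupp.single (0 : Fin 2) i + Finsupp.single 1 j = Finsupp.single 0 i' + Finsupp.single 1 j')
      ↔ i = i' ∧ j = j' := by
  constructor
  · intro h
    have h0 := DFunLike.congr_fun h 0
    have h1 := DFunLike.congr_fun h 1
    simp at h0 h1
    exact ⟨h0, h1⟩
  · rintro ⟨rfl, rfl⟩; rfl

lemma mcoeff_mono_s7 (i j i' j' : ℕ) (c : ℂ) :
    mcoeff i j (C c * X 0 ^ i' * X 1 ^ j') = if i' = i ∧ j' = j then c else 0 := by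
  rw [X_pow_mul_eq, mcoeff, coeff_monomial]
  simp only [exponent_eq_iff]

lemma mcoeff_C_mul (i j : ℕ) (t : ℂ) (F : P2) : mcoeff i j (C t * F) = t * mcoeff i j F := by
  simp [mcoeff]

lemma qcoeffs_formOf (a : Fin 6 → ℂ) : qcoeffs (formOf a) = a := by
  funext k
  simp only [qcoeffs, formOf, Fin.sum_univ_six, mcoeff_add, mcoeff_mono_s7]
  fin_cases k <;> simp

/-- The linear form `u₀x₁ + u₁x₂`. -/
def pv (u : Fin 2 → ℂ) : P2 := C (u 0) * X 0 + C (u 1) * X 1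

/-- The numbers `C(5,i)/10`. -/
def binw : Fin 6 → ℂ := ![1/10, 1/2, 1, 1, 1/2, 1/10]

/-- The coefficients of `Σ (c_k/10) (u_{k0} x₁ + u_{k1} x₂)⁵`, a combination of three fifth powers. -/
def sumForm (c : Fin 3 → ℂ) (u : Fin 3 → Fin 2 → ℂ) : Fin 6 → ℂ :=
  fun i => binw i * ∑ k, c k * u k 0 ^ (5 - (i : ℕ)) * u k 1 ^ (i : ℕ)

lemma formOf_sumForm (c : Fin 3 → ℂ) (u : Fin 3 → Fin 2 → ℂ) :
    formOf (sumForm c u) = ∑ k, C (c k / 10) * pv (u k) ^ 5 := by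
  refine MvPolynomial.funext fun x => ?_
  simp only [formOf, Fin.sum_univ_six, Fin.sum_univ_three, sumForm, binw, pv]
  simp
  ring

lemma eval_smul_of_homogeneous {P : MvPolynomial (Fin 6) ℂ} {n : ℕ} (hP : P.IsHomogeneous n)
    (t : ℂ) (a : Fin 6 → ℂ) : eval (t • a) P = t ^ n * eval a P := by
  rw [eval_eq, eval_eq, Finset.mul_sum]
  refine Finset.sum_congr rfl fun d hd => ?_
  have hd' : ∑ i ∈ d.support, d i = n := by
    have := hP (mem_support_iff.1 hd)
    simpa [Finsupp.weight_apply, Finsupp.sum] using this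
  simp only [Pi.smul_apply, smul_eq_mul, mul_pow, Finset.prod_mul_distrib,
    Finset.prod_pow_eq_pow_sum, hd']
  ring

/-- The row vector `u` times the matrix with rows `m 0`, `m 1`. -/
def rowMul (m : Fin 2 → Fin 2 → ℂ) (u : Fin 2 → ℂ) : Fin 2 → ℂ :=
  fun j => u 0 * m 0 j + u 1 * m 1 j

lemma eval_sumForm_SL {P : MvPolynomial (Fin 6) ℂ} (hinv : IsInvariantPoly P)
    (m : Fin 2 → Fin 2 → ℂ) (hm : br (m 0) (m 1) = 1) (c : Fin 3 → ℂ) (u : Fin 3 → Fin 2 → ℂ) :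
    eval (sumForm c fun k => rowMul m (u k)) P = eval (sumForm c u) P := by
  let g : Matrix.SpecialLinearGroup (Fin 2) ℂ :=
    ⟨Matrix.of m, by rw [Matrix.det_fin_two]; simpa [br, mul_comm] using hm⟩
  have h := hinv g⁻¹ (sumForm c u)
  rw [← h]
  congr 1
  have : actSL g⁻¹ (formOf (sumForm c u)) = formOf (sumForm c fun k => rowMul m (u k)) := by
    rw [formOf_sumForm, formOf_sumForm, actSL, inv_inv]
    refine MvPolynomial.funext fun x => ?_
    simp only [Fin.sum_univ_three, Fin.sum_univ_two, pv, rowMul, g]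
    simp
    ring
  rw [this, qcoeffs_formOf]

lemma sumForm_smul (c : Fin 3 → ℂ) (s : ℂ) (u : Fin 3 → Fin 2 → ℂ) :
    sumForm c (fun k => s • u k) = s ^ 5 • sumForm c u := by
  funext i
  fin_cases i <;> simp [sumForm, Fin.sum_univ_three] <;> ring

lemma sumForm_coeff_smul (c : Fin 3 → ℂ) (s : ℂ) (u : Fin 3 → Fin 2 → ℂ) :
    sumForm (fun k => s * c k) u = s • sumForm c u := by
  funext i
  simp [sumForm, Fin.sum_univ_three]
  ring

/-- An invariant of degree `48` of the binary quintic has weight `5 · 48 / 2 = 120` under `GL₂`. -/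
lemma eval_sumForm_GL {P : MvPolynomial (Fin 6) ℂ} (hP : P.IsHomogeneous 48)
    (hinv : IsInvariantPoly P) (m : Fin 2 → Fin 2 → ℂ) (hm : br (m 0) (m 1) ≠ 0)
    (c : Fin 3 → ℂ) (u : Fin 3 → Fin 2 → ℂ) :
    eval (sumForm c fun k => rowMul m (u k)) P
      = br (m 0) (m 1) ^ 120 * eval (sumForm c u) P := by
  obtain ⟨s, hs⟩ := IsAlgClosed.exists_eq_mul_self (br (m 0) (m 1))
  have hs0 : s ≠ 0 := by rintro rfl; simp [hs] at hm
  have h1 := eval_sumForm_SL hinv (fun i => s⁻¹ • m i) (by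
    have : br (s⁻¹ • m 0) (s⁻¹ • m 1) = s⁻¹ * s⁻¹ * br (m 0) (m 1) := by
      simp [br]; ring
    rw [this, hs]; field_simp) c u
  have h2 : (fun k => rowMul m (u k)) = fun k => s • rowMul (fun i => s⁻¹ • m i) (u k) := by
    funext k j
    simp [rowMul]
    field_simp
  rw [h2, sumForm_smul, eval_smul_of_homogeneous hP, h1, hs]
  ring

/-! ### Sylvester's canonical form -/

/-- Three linear forms with sum zero and all brackets equal to one. -/
def stdVec : Fin 3 → Fin 2 → ℂ := ![![1, 0], ![0, 1], ![-1, -1]]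

/-- The combination of the fifth powers of `stdVec` with coefficients `U₁U₂, U₂U₀, U₀U₁`. For nonzero
`U_k` it represents, up to `GL₂` and scalars, the sums of three fifth powers with `Uvec` equal to `U`. -/
def sylv (U : Fin 3 → ℂ) : Fin 6 → ℂ :=
  sumForm ![U 1 * U 2, U 2 * U 0, U 0 * U 1] stdVec

/-- The quantities `U_k = c_i c_j (u_i u_j)^5`. -/
def Uvec (c : Fin 3 → ℂ) (u : Fin 3 → Fin 2 → ℂ) : Fin 3 → ℂ :=
  ![c 1 * c 2 * br (u 1) (u 2) ^ 5, c 2 * c 0 * br (u 2) (u 0) ^ 5,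
    c 0 * c 1 * br (u 0) (u 1) ^ 5]

/-- For pairwise independent `u_k`, the matrix sending `stdVec` to
`((u₁u₂)u₀, (u₂u₀)u₁, (u₀u₁)u₂)` moves `sylv (Uvec c u)` to a multiple of `sumForm c u`. -/
lemma eval_sylv_Uvec {P : MvPolynomial (Fin 6) ℂ} (hP : P.IsHomogeneous 48)
    (hinv : IsInvariantPoly P) (c : Fin 3 → ℂ) (u : Fin 3 → Fin 2 → ℂ)
    (h0 : br (u 1) (u 2) ≠ 0) (h1 : br (u 2) (u 0) ≠ 0) (h2 : br (u 0) (u 1) ≠ 0) :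
    eval (sylv (Uvec c u)) P
      = (Uvec c u 0 * Uvec c u 1 * Uvec c u 2) ^ 24 * eval (sumForm c u) P := by
  set p := br (u 1) (u 2) with hp
  set q := br (u 2) (u 0) with hq
  set r := br (u 0) (u 1) with hr
  have hdet : br (p • u 0) (q • u 1) = p * q * r := by
    rw [hr]; simp [br]; ring
  have key := eval_sumForm_GL hP hinv ![p • u 0, q • u 1] (by
    simp only [Matrix.cons_val_zero, Matrix.cons_val_one]
    rw [hdet]; positivity)
    ![Uvec c u 1 * Uvec c u 2, Uvec c u 2 * Uvec c u 0, Uvec c u 0 * Uvec c u 1] stdVec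
  simp only [Matrix.cons_val_zero, Matrix.cons_val_one] at key
  rw [hdet] at key
  have hform : (sumForm ![Uvec c u 1 * Uvec c u 2, Uvec c u 2 * Uvec c u 0,
      Uvec c u 0 * Uvec c u 1] fun k => rowMul ![p • u 0, q • u 1] (stdVec k))
      = (c 0 * c 1 * c 2 * (p * q * r) ^ 5) • sumForm c u := by
    have hv : (fun k => rowMul ![p • u 0, q • u 1] (stdVec k))
        = ![p • u 0, q • u 1, r • u 2] := by
      funext k j
      fin_cases k <;> fin_cases j <;> simp [rowMul, stdVec, hp, hq, hr, br] <;> ring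
    rw [hv]
    funext i
    fin_cases i <;> simp [sumForm, Fin.sum_univ_three, Uvec, ← hp, ← hq, ← hr] <;> ring
  rw [hform, eval_smul_of_homogeneous hP] at key
  have hne : (p * q * r) ^ 120 ≠ 0 := by positivity
  apply mul_left_cancel₀ hne
  rw [sylv, ← key]
  simp only [Uvec, ← hp, ← hq, ← hr]
  simp
  ring

/-- The polynomial `U ↦ P(sylv U)`. -/
def hPoly (P : MvPolynomial (Fin 6) ℂ) : MvPolynomial (Fin 3) ℂ :=
  aeval (fun i : Fin 6 => C (binw i) * (X 1 * X 2 * C (1 ^ (5 - (i : ℕ)) * 0 ^ (i : ℕ)) +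
    X 2 * X 0 * C (0 ^ (5 - (i : ℕ)) * 1 ^ (i : ℕ))
    + X 0 * X 1 * C ((-1) ^ (5 - (i : ℕ)) * (-1) ^ (i : ℕ)))) P

lemma eval_hPoly (P : MvPolynomial (Fin 6) ℂ) (U : Fin 3 → ℂ) :
    eval U (hPoly P) = eval (sylv U) P := by
  have : (eval U).comp (aeval (R := ℂ) (fun i : Fin 6 => (C (binw i) *
    (X 1 * X 2 * C (1 ^ (5 - (i : ℕ)) * 0 ^ (i : ℕ)) +
    X 2 * X 0 * C (0 ^ (5 - (i : ℕ)) * 1 ^ (i : ℕ))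
    + X 0 * X 1 * C ((-1) ^ (5 - (i : ℕ)) * (-1) ^ (i : ℕ))) : MvPolynomial (Fin 3) ℂ))).toRingHom
      = eval (sylv U) := by
    apply MvPolynomial.ringHom_ext
    · intro r; simp
    · intro i
      fin_cases i <;> simp [sylv, sumForm, Fin.sum_univ_three, stdVec]
  exact DFunLike.congr_fun this P

lemma eval_sylv_swap {P : MvPolynomial (Fin 6) ℂ} (hP : P.IsHomogeneous 48)
    (hinv : IsInvariantPoly P) (U : Fin 3 → ℂ) :
    eval (sylv ![U 1, U 0, U 2]) P = eval (sylv U) P := by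
  have key := eval_sumForm_GL hP hinv ![![0, 1], ![1, 0]] (by simp [br])
    ![U 1 * U 2, U 2 * U 0, U 0 * U 1] stdVec
  rw [← sylv] at key
  have : br (![![0, 1], ![1, 0]] 0) (![![0, 1], ![1, 0]] 1) = -1 := by simp [br]
  rw [this] at key
  norm_num at key
  rw [← key]
  congr 2
  funext i
  fin_cases i <;> simp [sylv, sumForm, Fin.sum_univ_three, stdVec, rowMul, -mul_eq_mul_left_iff] <;> ring

lemma eval_sylv_swap' {P : MvPolynomial (Fin 6) ℂ} (hP : P.IsHomogeneous 48)
    (hinv : IsInvariantPoly P) (U : Fin 3 → ℂ) :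
    eval (sylv ![U 0, U 2, U 1]) P = eval (sylv U) P := by
  have key := eval_sumForm_GL hP hinv ![![1, 0], ![-1, -1]] (by simp [br])
    ![U 1 * U 2, U 2 * U 0, U 0 * U 1] stdVec
  rw [← sylv] at key
  have : br (![![1, 0], ![-1, -1]] 0) (![![1, 0], ![-1, -1]] 1) = -1 := by simp [br]
  rw [this] at key
  norm_num at key
  rw [← key]
  congr 2
  funext i
  fin_cases i <;> simp [sylv, sumForm, Fin.sum_univ_three, stdVec, rowMul, -mul_eq_mul_left_iff] <;> ring

/-- A transposition of the `U_k` is realised by a matrix of determinant `-1` permuting `stdVec`; the weight `120` being even, `P` does not see it. -/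
lemma hPoly_symm {P : MvPolynomial (Fin 6) ℂ} (hP : P.IsHomogeneous 48)
    (hinv : IsInvariantPoly P) : (hPoly P).IsSymmetric := by
  have hs : rename (Equiv.swap (0 : Fin 3) 1) (hPoly P) = hPoly P := by
    refine MvPolynomial.funext fun U => ?_
    rw [eval_rename, eval_hPoly, eval_hPoly, ← eval_sylv_swap hP hinv]
    congr 2
  have ht : rename (Equiv.swap (1 : Fin 3) 2) (hPoly P) = hPoly P := by
    refine MvPolynomial.funext fun U => ?_
    rw [eval_rename, eval_hPoly, eval_hPoly, ← eval_sylv_swap' hP hinv]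
    congr 2
  have hmul : ∀ σ τ : Equiv.Perm (Fin 3), rename σ (hPoly P) = hPoly P →
      rename τ (hPoly P) = hPoly P → rename (σ * τ) (hPoly P) = hPoly P := by
    intro σ τ h1 h2
    rw [Equiv.Perm.coe_mul, ← rename_rename, h2, h1]
  intro σ
  have hcases : ∀ σ : Equiv.Perm (Fin 3), σ = Equiv.swap 0 1 * Equiv.swap 0 1 ∨
      σ = Equiv.swap 0 1 ∨ σ = Equiv.swap 1 2 ∨ σ = Equiv.swap 0 1 * Equiv.swap 1 2 ∨
      σ = Equiv.swap 1 2 * Equiv.swap 0 1 ∨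
      σ = Equiv.swap 0 1 * (Equiv.swap 1 2 * Equiv.swap 0 1) := by decide
  rcases hcases σ with rfl | rfl | rfl | rfl | rfl | rfl
  · exact hmul _ _ hs hs
  · exact hs
  · exact ht
  · exact hmul _ _ hs ht
  · exact hmul _ _ ht hs
  · exact hmul _ _ hs (hmul _ _ ht hs)

/-- On the forms `sylv U`, the invariant `P` is a polynomial in the elementary symmetric functions
of `U`. -/
lemma exists_esymm_poly {P : MvPolynomial (Fin 6) ℂ} (hP : P.IsHomogeneous 48)
    (hinv : IsInvariantPoly P) : ∃ q : MvPolynomial (Fin 3) ℂ, ∀ U : Fin 3 → ℂ,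
      eval (sylv U) P = eval ![U 0 + U 1 + U 2, U 0 * U 1 + U 0 * U 2 + U 1 * U 2,
        U 0 * U 1 * U 2] q := by
  obtain ⟨q, hq⟩ := esymmAlgHom_surjective (σ := Fin 3) (R := ℂ) (n := 3) (by simp)
    ⟨hPoly P, hPoly_symm hP hinv⟩
  refine ⟨q, fun U => ?_⟩
  have hq' := congrArg (fun x : symmetricSubalgebra (Fin 3) ℂ => eval U (x : MvPolynomial (Fin 3) ℂ)) hq
  simp only [esymmAlgHom_apply, eval_hPoly] at hq'
  rw [← hq']
  have : (eval U).comp (aeval (R := ℂ) (fun i : Fin 3 => esymm (Fin 3) ℂ (↑i + 1))).toRingHom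
      = eval ![U 0 + U 1 + U 2, U 0 * U 1 + U 0 * U 2 + U 1 * U 2, U 0 * U 1 * U 2] := by
    apply MvPolynomial.ringHom_ext
    · intro r; simp
    · intro i
      have h1 : Finset.powersetCard 1 (Finset.univ : Finset (Fin 3)) = {{0}, {1}, {2}} := by decide
      have h2 : Finset.powersetCard 2 (Finset.univ : Finset (Fin 3)) = {{0, 1}, {0, 2}, {1, 2}} := by
        decide
      have h3 : Finset.powersetCard 3 (Finset.univ : Finset (Fin 3)) = {{0, 1, 2}} := by decide
      have n1 : ({0, 1} : Finset (Fin 3)) ≠ {0, 2} := by decide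
      have n2 : ({0, 1} : Finset (Fin 3)) ≠ {1, 2} := by decide
      have n3 : ({0, 2} : Finset (Fin 3)) ≠ {1, 2} := by decide
      simp only [esymm, RingHom.comp_apply, AlgHom.toRingHom_eq_coe, RingHom.coe_coe, aeval_X]
      fin_cases i
      · simp [h1]
        try ring
      · simp [h2, n1, n2, n3]
        try ring
      · simp [h3]
        try ring
  exact DFunLike.congr_fun this q

/-! ### Polynomials in `J`, `K`, `L` on sums of three fifth powers -/

/-- The invariant of degree `4` of a sum of three fifth powers, in terms of the quantities `U_k`. -/
def symJ (U : Fin 3 → ℂ) : ℂ := (U 0 + U 1 + U 2) ^ 2 - 4 * (U 0 * U 1 + U 0 * U 2 + U 1 * U 2)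
/-- The product `U₀U₁U₂`; its square is the invariant of degree `12`. -/
def symE (U : Fin 3 → ℂ) : ℂ := U 0 * U 1 * U 2
/-- The invariant of degree `8` of a sum of three fifth powers, in terms of the quantities `U_k`. -/
def symK (U : Fin 3 → ℂ) : ℂ := (U 0 + U 1 + U 2) * symE U

/-- After inversion of `e₃`, the quantities `e₁²-4e₂`, `e₁e₃`, `e₃` generate `e₁` and `e₂`. -/
lemma exists_pow_mul_eq (q : MvPolynomial (Fin 3) ℂ) : ∃ (N : ℕ) (R : MvPolynomial (Fin 3) ℂ),
    ∀ e₁ e₂ e₃ : ℂ, e₃ ^ N * eval ![e₁, e₂, e₃] q = eval ![e₁ ^ 2 - 4 * e₂, e₁ * e₃, e₃] R := by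
  induction q using MvPolynomial.induction_on with
  | C a => exact ⟨0, C a, by simp⟩
  | add p q hp hq =>
    obtain ⟨N, R, h⟩ := hp
    obtain ⟨M, T, h'⟩ := hq
    refine ⟨N + M, X 2 ^ M * R + X 2 ^ N * T, fun e₁ e₂ e₃ => ?_⟩
    simp only [map_add, map_mul, map_pow, eval_X, ← h, ← h']
    simp
    ring
  | mul_X p i hp =>
    obtain ⟨N, R, h⟩ := hp
    fin_cases i
    · refine ⟨N + 1, R * X 1, fun e₁ e₂ e₃ => ?_⟩
      simp only [map_mul, eval_X, ← h]
      simp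
      ring
    · refine ⟨N + 2, R * (C (1 / 4) * (X 1 ^ 2 - X 0 * X 2 ^ 2)), fun e₁ e₂ e₃ => ?_⟩
      simp only [map_mul, map_sub, map_pow, eval_X, eval_C, ← h]
      simp
      ring
    · refine ⟨N, R * X 2, fun e₁ e₂ e₃ => ?_⟩
      simp only [map_mul, eval_X, ← h]
      simp
      ring

lemma exists_split_last (R : MvPolynomial (Fin 3) ℂ) :
    ∃ (R₀ : MvPolynomial (Fin 2) ℂ) (R₁ : MvPolynomial (Fin 3) ℂ), ∀ x y e : ℂ,
      eval ![x, y, e] R = eval ![x, y] R₀ + e * eval ![x, y, e] R₁ := by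
  induction R using MvPolynomial.induction_on with
  | C a => exact ⟨C a, 0, by simp⟩
  | add p q hp hq =>
    obtain ⟨A, B, h⟩ := hp
    obtain ⟨A', B', h'⟩ := hq
    refine ⟨A + A', B + B', fun x y e => ?_⟩
    simp only [map_add, h, h']
    ring
  | mul_X p i hp =>
    obtain ⟨A, B, h⟩ := hp
    fin_cases i
    · refine ⟨A * X 0, B * X 0, fun x y e => ?_⟩
      simp only [map_mul, eval_X, h]
      simp
      ring
    · refine ⟨A * X 1, B * X 1, fun x y e => ?_⟩
      simp only [map_mul, eval_X, h]
      simp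
      ring
    · refine ⟨0, p, fun x y e => ?_⟩
      simp
      ring

lemma exists_even_odd (R : MvPolynomial (Fin 3) ℂ) :
    ∃ A B : MvPolynomial (Fin 3) ℂ, ∀ x y e : ℂ,
      eval ![x, y, e] R = eval ![x, y, e ^ 2] A + e * eval ![x, y, e ^ 2] B := by
  induction R using MvPolynomial.induction_on with
  | C a => exact ⟨C a, 0, by simp⟩
  | add p q hp hq =>
    obtain ⟨A, B, h⟩ := hp
    obtain ⟨A', B', h'⟩ := hq
    refine ⟨A + A', B + B', fun x y e => ?_⟩
    simp only [map_add, h, h']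
    ring
  | mul_X p i hp =>
    obtain ⟨A, B, h⟩ := hp
    fin_cases i
    · refine ⟨A * X 0, B * X 0, fun x y e => ?_⟩
      simp only [map_mul, eval_X, h]
      simp
      ring
    · refine ⟨A * X 1, B * X 1, fun x y e => ?_⟩
      simp only [map_mul, eval_X, h]
      simp
      ring
    · refine ⟨B * X 2, A, fun x y e => ?_⟩
      simp only [map_mul, eval_X, h]
      simp
      ring

lemma br_ne_zero_of_symE {c : Fin 3 → ℂ} {u : Fin 3 → Fin 2 → ℂ} (h : symE (Uvec c u) ≠ 0) :
    br (u 1) (u 2) ≠ 0 ∧ br (u 2) (u 0) ≠ 0 ∧ br (u 0) (u 1) ≠ 0 := by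
  refine ⟨?_, ?_, ?_⟩ <;> intro h0 <;> apply h <;> simp [symE, Uvec, h0]

/-- The quintics degenerating to `α x⁵/10 + β x⁴y/2 + y⁵/10` as `δ → 0`. -/
def famForm (α β δ : ℂ) : Fin 6 → ℂ :=
  ![1/10 * α, 1/2 * β, α * δ ^ 2, β * δ ^ 2, 1/2 * α * δ ^ 4, 1/10 * (β * δ ^ 4 + 1)]

/-- The coefficients of the three fifth powers whose sum is `famForm α β δ` for `δ ≠ 0`. -/
def famC (α β δ : ℂ) : Fin 3 → ℂ := ![(α + β / δ) / 2, (α - β / δ) / 2, 1]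
/-- The three linear forms whose fifth powers combine to `famForm α β δ` for `δ ≠ 0`. -/
def famU (δ : ℂ) : Fin 3 → Fin 2 → ℂ := ![![1, δ], ![1, -δ], ![0, 1]]

lemma sumForm_fam (α β : ℂ) {δ : ℂ} (hδ : δ ≠ 0) :
    sumForm (famC α β δ) (famU δ) = famForm α β δ := by
  funext i
  fin_cases i <;> simp [sumForm, famC, famU, famForm, binw, Fin.sum_univ_three] <;> field_simp <;>
    ring

lemma symE_fam (α β : ℂ) {δ : ℂ} (hδ : δ ≠ 0) :
    symE (Uvec (famC α β δ) (famU δ)) = 2 * δ * (δ ^ 2 * α ^ 2 - β ^ 2) ^ 2 := by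
  simp [symE, Uvec, famC, famU, br]
  field_simp
  ring

lemma symJ_fam (α β : ℂ) {δ : ℂ} (hδ : δ ≠ 0) :
    symJ (Uvec (famC α β δ) (famU δ)) = α ^ 2 - 16 * δ ^ 2 * β * (δ ^ 2 * α ^ 2 - β ^ 2)
      + 64 * δ ^ 6 * (δ ^ 2 * α ^ 2 - β ^ 2) ^ 2 := by
  simp [symJ, Uvec, famC, famU, br]
  field_simp
  ring

lemma symK_fam (α β : ℂ) {δ : ℂ} (hδ : δ ≠ 0) :
    symK (Uvec (famC α β δ) (famU δ)) = 2 * (δ ^ 2 * α ^ 2 - β ^ 2) ^ 2 *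
      (-β - 8 * δ ^ 4 * (δ ^ 2 * α ^ 2 - β ^ 2)) := by
  rw [symK, symE_fam α β hδ]
  simp [Uvec, famC, famU, br]
  field_simp
  ring

/-- The power of `e₃` in the denominator can be lowered. Along the family `famForm α β δ` with
`δ → 0` the value of `P` stays bounded and `e₃ → 0`, while `(J, K)` tends to `(α², -2β⁵)`, an
essentially arbitrary pair. Hence the part `R₀` of `R` free of `e₃` vanishes and `R` is divisible
by `e₃`. -/
lemma descent {P : MvPolynomial (Fin 6) ℂ} (m : ℕ)
    (h : ∃ R : MvPolynomial (Fin 3) ℂ, ∀ c u, symE (Uvec c u) ≠ 0 →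
      symE (Uvec c u) ^ (m + 1) * eval (sumForm c u) P
        = eval ![symJ (Uvec c u), symK (Uvec c u), symE (Uvec c u)] R) :
    ∃ R : MvPolynomial (Fin 3) ℂ, ∀ c u, symE (Uvec c u) ≠ 0 →
      symE (Uvec c u) ^ m * eval (sumForm c u) P
        = eval ![symJ (Uvec c u), symK (Uvec c u), symE (Uvec c u)] R := by
  obtain ⟨R, hR⟩ := h
  obtain ⟨R₀, R₁, hsplit⟩ := exists_split_last R
  have hlim : ∀ α β : ℂ, β ≠ 0 → eval ![α ^ 2, -2 * β ^ 5] R₀ = 0 := by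
    intro α β hβ
    let f : ℂ → ℂ := fun δ => (2 * δ * (δ ^ 2 * α ^ 2 - β ^ 2) ^ 2) ^ (m + 1) *
      eval (famForm α β δ) P
    let g : ℂ → ℂ := fun δ => eval ![α ^ 2 - 16 * δ ^ 2 * β * (δ ^ 2 * α ^ 2 - β ^ 2)
      + 64 * δ ^ 6 * (δ ^ 2 * α ^ 2 - β ^ 2) ^ 2, 2 * (δ ^ 2 * α ^ 2 - β ^ 2) ^ 2 *
      (-β - 8 * δ ^ 4 * (δ ^ 2 * α ^ 2 - β ^ 2)), 2 * δ * (δ ^ 2 * α ^ 2 - β ^ 2) ^ 2] R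
    have hf : Continuous f := by
      refine Continuous.mul (by fun_prop) ((MvPolynomial.continuous_eval P).comp ?_)
      refine continuous_pi fun i => ?_
      fin_cases i <;> simp [famForm] <;> fun_prop
    have hg : Continuous g := by
      refine (MvPolynomial.continuous_eval R).comp ?_
      refine continuous_pi fun i => ?_
      fin_cases i <;> simp <;> fun_prop
    have hfg : f =ᶠ[nhdsWithin 0 {0}ᶜ] g := by
      have h1 : ∀ᶠ δ : ℂ in nhdsWithin 0 {0}ᶜ, δ ^ 2 * α ^ 2 - β ^ 2 ≠ 0 := by
        apply Filter.Eventually.filter_mono nhdsWithin_le_nhds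
        have : Continuous fun δ : ℂ => δ ^ 2 * α ^ 2 - β ^ 2 := by fun_prop
        refine this.continuousAt.eventually_ne ?_
        simpa using hβ
      filter_upwards [h1, self_mem_nhdsWithin] with δ h1 h2
      have h2 : δ ≠ 0 := h2
      have := hR (famC α β δ) (famU δ)
      rw [symE_fam α β h2, symJ_fam α β h2, symK_fam α β h2, sumForm_fam α β h2] at this
      exact this (mul_ne_zero (mul_ne_zero two_ne_zero h2) (pow_ne_zero 2 h1))
    have h0 : f 0 = g 0 := by
      refine tendsto_nhds_unique (f := f) (l := nhdsWithin 0 {0}ᶜ)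
        (hf.continuousAt.tendsto.mono_left nhdsWithin_le_nhds) ?_
      exact (hg.continuousAt.tendsto.mono_left nhdsWithin_le_nhds).congr' hfg.symm
    have h3 : f 0 = 0 := by simp [f]
    have h4 : g 0 = eval ![α ^ 2, -2 * β ^ 5, 0] R := by
      simp only [g]
      congr 2
      ext i; fin_cases i <;> simp <;> ring
    rw [h3, h4, hsplit] at h0
    simpa using h0.symm
  have hR₀ : R₀ = 0 := by
    have : R₀ * X 1 = 0 := by
      refine MvPolynomial.funext fun v => ?_
      by_cases hv : v 1 = 0
      · simp [hv]
      obtain ⟨α, hα⟩ := IsAlgClosed.exists_pow_nat_eq (v 0) (n := 2) (by norm_num)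
      obtain ⟨β, hβ⟩ := IsAlgClosed.exists_pow_nat_eq (v 1 / (-2)) (n := 5) (by norm_num)
      have hβ0 : β ≠ 0 := by
        rintro rfl
        apply hv
        have : v 1 / (-2) = 0 := by rw [← hβ]; simp
        simpa using this
      have := hlim α β hβ0
      rw [hα, hβ] at this
      have hv' : ![v 0, -2 * (v 1 / (-2))] = v := by
        ext i; fin_cases i <;> simp <;> ring
      rw [hv'] at this
      simp [this]
    rcases mul_eq_zero.1 this with h | h
    · exact h
    · exact absurd h (X_ne_zero 1)
  refine ⟨R₁, fun c u hcu => ?_⟩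
  have := hR c u hcu
  rw [hsplit, hR₀] at this
  apply mul_left_cancel₀ hcu
  rw [← mul_assoc, ← pow_succ', this]
  simp

/-- On sums of three fifth powers, an invariant of degree `48` is a polynomial in `J`, `K`, `L = e₃²`.
Exchanging two of the three powers fixes `J` and `K` and changes the sign of `e₃`, which rules out
odd powers of `e₃`. -/
lemma exists_JKL_of_sumForm {P : MvPolynomial (Fin 6) ℂ} (hP : P.IsHomogeneous 48)
    (hinv : IsInvariantPoly P) : ∃ R : MvPolynomial (Fin 3) ℂ, ∀ c u, symE (Uvec c u) ≠ 0 →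
      eval (sumForm c u) P
        = eval ![symJ (Uvec c u), symK (Uvec c u), symE (Uvec c u) ^ 2] R := by
  obtain ⟨q, hq⟩ := exists_esymm_poly hP hinv
  obtain ⟨N, R, hR⟩ := exists_pow_mul_eq q
  have h0 : ∃ R : MvPolynomial (Fin 3) ℂ, ∀ c u, symE (Uvec c u) ≠ 0 →
      symE (Uvec c u) ^ (N + 24) * eval (sumForm c u) P
        = eval ![symJ (Uvec c u), symK (Uvec c u), symE (Uvec c u)] R := by
    refine ⟨R, fun c u h => ?_⟩
    obtain ⟨b0, b1, b2⟩ := br_ne_zero_of_symE h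
    have h1 := eval_sylv_Uvec hP hinv c u b0 b1 b2
    rw [pow_add, mul_assoc, symE, ← h1, hq, hR]
    rfl
  have h1 : ∀ m : ℕ, (∃ R : MvPolynomial (Fin 3) ℂ, ∀ c u, symE (Uvec c u) ≠ 0 →
      symE (Uvec c u) ^ m * eval (sumForm c u) P
        = eval ![symJ (Uvec c u), symK (Uvec c u), symE (Uvec c u)] R) →
      ∃ R : MvPolynomial (Fin 3) ℂ, ∀ c u, symE (Uvec c u) ≠ 0 →
      symE (Uvec c u) ^ 0 * eval (sumForm c u) P
        = eval ![symJ (Uvec c u), symK (Uvec c u), symE (Uvec c u)] R := by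
    intro m
    induction m with
    | zero => exact id
    | succ m ih => exact fun h => ih (descent m h)
  obtain ⟨T, hT⟩ := h1 _ h0
  obtain ⟨A, B, hAB⟩ := exists_even_odd T
  refine ⟨A, fun c u h => ?_⟩
  have e1 := hT c u h
  -- exchanging two of the three fifth powers changes the sign of `e₃`
  have hs : sumForm ![c 1, c 0, c 2] ![u 1, u 0, u 2] = sumForm c u := by
    funext i
    simp only [sumForm, Fin.sum_univ_three]
    simp [-mul_eq_mul_left_iff]
    ring
  have hU : Uvec ![c 1, c 0, c 2] ![u 1, u 0, u 2]
      = ![-Uvec c u 1, -Uvec c u 0, -Uvec c u 2] := by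
    funext i
    fin_cases i <;> simp [Uvec, br] <;> ring
  have hE : symE (Uvec ![c 1, c 0, c 2] ![u 1, u 0, u 2]) = -symE (Uvec c u) := by
    rw [hU]; simp [symE, -mul_eq_mul_right_iff]; ring
  have hJ : symJ (Uvec ![c 1, c 0, c 2] ![u 1, u 0, u 2]) = symJ (Uvec c u) := by
    rw [hU]; simp [symJ]; ring
  have hK : symK (Uvec ![c 1, c 0, c 2] ![u 1, u 0, u 2]) = symK (Uvec c u) := by
    rw [hU]; simp [symK, symE]; ring
  have e2 := hT ![c 1, c 0, c 2] ![u 1, u 0, u 2] (by rw [hE]; simpa using h)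
  rw [hs, hE, hJ, hK, hAB] at e2
  rw [hAB] at e1
  simp only [pow_zero, one_mul, neg_sq] at e1 e2
  linear_combination (e1 + e2) / 2

/-! ### `J`, `K`, `L` as polynomials in the coefficients -/

section Invariants
variable {A : Type*} [CommRing A]

/-- The leading coefficient of the quadratic covariant of the quintic `Σ C(5,i) b_i x₁^(5-i) x₂^i`. -/
def covA (b : Fin 6 → A) : A := b 0 * b 4 - 4 * b 1 * b 3 + 3 * b 2 ^ 2
/-- The middle coefficient of the quadratic covariant. -/
def covB (b : Fin 6 → A) : A := b 0 * b 5 - 3 * b 1 * b 4 + 2 * b 2 * b 3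
/-- The last coefficient of the quadratic covariant. -/
def covC (b : Fin 6 → A) : A := b 1 * b 5 - 4 * b 2 * b 4 + 3 * b 3 ^ 2

/-- The determinant of a `3 × 3` matrix, given by its entries. -/
def det3 (x₀ x₁ x₂ y₀ y₁ y₂ z₀ z₁ z₂ : A) : A :=
  x₀ * (y₁ * z₂ - y₂ * z₁) - y₀ * (x₁ * z₂ - x₂ * z₁) + z₀ * (x₁ * y₂ - x₂ * y₁)

/-- The canonizant of the quintic is the cubic `can3 t³ + can2 t² + can1 t + can0` whose coefficients
are the signed maximal minors of the `3 × 4` Hankel matrix `(b_{i+j})`. This is its constant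
term. -/
def can0 (b : Fin 6 → A) : A := det3 (b 1) (b 2) (b 3) (b 2) (b 3) (b 4) (b 3) (b 4) (b 5)
/-- The coefficient of `t` in the canonizant. -/
def can1 (b : Fin 6 → A) : A := -det3 (b 0) (b 1) (b 2) (b 2) (b 3) (b 4) (b 3) (b 4) (b 5)
/-- The coefficient of `t²` in the canonizant. -/
def can2 (b : Fin 6 → A) : A := det3 (b 0) (b 1) (b 2) (b 1) (b 2) (b 3) (b 3) (b 4) (b 5)
/-- The coefficient of `t³` in the canonizant. -/
def can3 (b : Fin 6 → A) : A := -det3 (b 0) (b 1) (b 2) (b 1) (b 2) (b 3) (b 2) (b 3) (b 4)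

/-- The invariant `J` of degree `4`: the discriminant of the quadratic covariant. -/
def invJ (b : Fin 6 → A) : A := covB b ^ 2 - 4 * covA b * covC b

/-- The invariant `K` of degree `8`: up to normalisation, the apolar pairing of the quadratic covariant
with the Hessian of the canonizant. -/
def invK (b : Fin 6 → A) : A :=
  -(2 * covA b * (can1 b ^ 2 - 3 * can0 b * can2 b) +
    covB b * (can1 b * can2 b - 9 * can0 b * can3 b) +
    2 * covC b * (can2 b ^ 2 - 3 * can1 b * can3 b))

/-- The invariant `L` of degree `12`: the discriminant of the canonizant. -/
def invL (b : Fin 6 → A) : A :=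
  can1 b ^ 2 * can2 b ^ 2 - 4 * can0 b * can2 b ^ 3 - 4 * can1 b ^ 3 * can3 b
    + 18 * can0 b * can1 b * can2 b * can3 b - 27 * can0 b ^ 2 * can3 b ^ 2

lemma can_rel0 (b : Fin 6 → A) :
    can0 b * b 0 + can1 b * b 1 + can2 b * b 2 + can3 b * b 3 = 0 := by
  simp only [can0, can1, can2, can3, det3]; ring
lemma can_rel1 (b : Fin 6 → A) :
    can0 b * b 1 + can1 b * b 2 + can2 b * b 3 + can3 b * b 4 = 0 := by
  simp only [can0, can1, can2, can3, det3]; ring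
lemma can_rel2 (b : Fin 6 → A) :
    can0 b * b 2 + can1 b * b 3 + can2 b * b 4 + can3 b * b 5 = 0 := by
  simp only [can0, can1, can2, can3, det3]; ring

end Invariants

/-- `momSum c μ i = Σ c_k μ_k^i`. -/
def momSum (c μ : Fin 3 → ℂ) : Fin 6 → ℂ := fun i => ∑ k, c k * μ k ^ (i : ℕ)

/-- The Vandermonde product of three numbers. -/
def vand (μ : Fin 3 → ℂ) : ℂ := (μ 0 - μ 1) * (μ 1 - μ 2) * (μ 0 - μ 2)

section
variable (c μ : Fin 3 → ℂ)

lemma can3_momSum : can3 (momSum c μ) = -(c 0 * c 1 * c 2 * vand μ ^ 2) := by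
  simp [can3, det3, momSum, Fin.sum_univ_three, vand]; ring
lemma can2_momSum : can2 (momSum c μ) = c 0 * c 1 * c 2 * vand μ ^ 2 * (μ 0 + μ 1 + μ 2) := by
  simp [can2, det3, momSum, Fin.sum_univ_three, vand]; ring
lemma can1_momSum : can1 (momSum c μ) =
    -(c 0 * c 1 * c 2 * vand μ ^ 2 * (μ 0 * μ 1 + μ 0 * μ 2 + μ 1 * μ 2)) := by
  simp [can1, det3, momSum, Fin.sum_univ_three, vand]; ring
lemma can0_momSum : can0 (momSum c μ) = c 0 * c 1 * c 2 * vand μ ^ 2 * (μ 0 * μ 1 * μ 2) := by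
  simp [can0, det3, momSum, Fin.sum_univ_three, vand]; ring
lemma covA_momSum : covA (momSum c μ) = c 0 * c 1 * (μ 0 - μ 1) ^ 4 +
    c 1 * c 2 * (μ 1 - μ 2) ^ 4 + c 0 * c 2 * (μ 0 - μ 2) ^ 4 := by
  simp [covA, momSum, Fin.sum_univ_three]; ring
lemma covB_momSum : covB (momSum c μ) = c 0 * c 1 * (μ 0 - μ 1) ^ 4 * (μ 0 + μ 1) +
    c 1 * c 2 * (μ 1 - μ 2) ^ 4 * (μ 1 + μ 2) + c 0 * c 2 * (μ 0 - μ 2) ^ 4 * (μ 0 + μ 2) := by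
  simp [covB, momSum, Fin.sum_univ_three]; ring
lemma covC_momSum : covC (momSum c μ) = c 0 * c 1 * (μ 0 - μ 1) ^ 4 * (μ 0 * μ 1) +
    c 1 * c 2 * (μ 1 - μ 2) ^ 4 * (μ 1 * μ 2) + c 0 * c 2 * (μ 0 - μ 2) ^ 4 * (μ 0 * μ 2) := by
  simp [covC, momSum, Fin.sum_univ_three]; ring

lemma symJ_momSum : symJ (Uvec c fun k => ![1, μ k]) = invJ (momSum c μ) := by
  rw [invJ, covA_momSum, covB_momSum, covC_momSum]
  simp [symJ, Uvec, br]; ring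

lemma symK_momSum : symK (Uvec c fun k => ![1, μ k]) = invK (momSum c μ) := by
  rw [invK, covA_momSum, covB_momSum, covC_momSum, can0_momSum, can1_momSum, can2_momSum,
    can3_momSum]
  have hE : symE (Uvec c fun k => ![1, μ k])
      = (c 0 * c 1 * c 2 * vand μ ^ 2) ^ 2 * vand μ := by
    simp [symE, Uvec, br, vand]; ring
  rw [symK, hE]
  generalize hw : c 0 * c 1 * c 2 * vand μ ^ 2 = w
  simp [Uvec, br, vand]; ring

lemma symE_momSum : symE (Uvec c fun k => ![1, μ k]) ^ 2 = invL (momSum c μ) := by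
  rw [invL, can0_momSum, can1_momSum, can2_momSum, can3_momSum]
  have hE : symE (Uvec c fun k => ![1, μ k])
      = (c 0 * c 1 * c 2 * vand μ ^ 2) ^ 2 * vand μ := by
    simp [symE, Uvec, br, vand]; ring
  rw [hE]
  generalize hw : c 0 * c 1 * c 2 * vand μ ^ 2 = w
  simp [vand]; ring
end

/-- The numbers `10/C(5,i)`. -/
def bw : Fin 6 → ℂ := ![10, 2, 1, 1, 2, 10]

/-- Sylvester's theorem: if the canonizant has degree three and distinct roots `μ_k`, then the quintic
is a combination of the fifth powers of `x₁ + μ_k x₂`. The relations `can_rel` say that `b`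
satisfies the linear recursion whose characteristic polynomial is the canonizant. -/
lemma exists_momSum (b : Fin 6 → ℂ) (h3 : can3 b ≠ 0) (hL : invL b ≠ 0) :
    ∃ c μ : Fin 3 → ℂ, b = momSum c μ := by
  let Q : Cubic ℂ := ⟨can3 b, can2 b, can1 b, can0 b⟩
  have ha : Q.a ≠ 0 := h3
  have hs : (Q.toPoly.map (RingHom.id ℂ)).Splits := by
    exact IsAlgClosed.splits _
  obtain ⟨x, y, z, hr⟩ := (Cubic.splits_iff_roots_eq_three (φ := RingHom.id ℂ) ha).1 hs
  have e2 := Cubic.b_eq_three_roots ha hr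
  have e1 := Cubic.c_eq_three_roots ha hr
  have e0 := Cubic.d_eq_three_roots ha hr
  have hd : Q.discr ≠ 0 := by
    have : Q.discr = invL b := by simp only [Cubic.discr, invL, Q]; ring
    rwa [this]
  have hne := (Cubic.discr_ne_zero_iff_roots_ne ha hr).1 hd
  simp only [RingHom.id_apply, Q] at e0 e1 e2
  obtain ⟨hxy, hxz, hyz⟩ := hne
  have hxy := sub_ne_zero.2 hxy
  have hxz := sub_ne_zero.2 hxz
  have hyz := sub_ne_zero.2 hyz
  have r0 := can_rel0 b
  have r1 := can_rel1 b
  have r2 := can_rel2 b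
  rw [e0, e1, e2] at r0 r1 r2
  have q3 : b 3 = (x + y + z) * b 2 - (x * y + x * z + y * z) * b 1 + x * y * z * b 0 := by
    apply mul_left_cancel₀ h3; linear_combination r0
  have q4 : b 4 = (x + y + z) * b 3 - (x * y + x * z + y * z) * b 2 + x * y * z * b 1 := by
    apply mul_left_cancel₀ h3; linear_combination r1
  have q5 : b 5 = (x + y + z) * b 4 - (x * y + x * z + y * z) * b 3 + x * y * z * b 2 := by
    apply mul_left_cancel₀ h3; linear_combination r2
  obtain ⟨c0, hc0⟩ : ∃ t, t = (b 2 - (y + z) * b 1 + y * z * b 0) / ((x - y) * (x - z)) := ⟨_, rfl⟩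
  obtain ⟨c1, hc1⟩ : ∃ t, t = (b 2 - (x + z) * b 1 + x * z * b 0) / (-(x - y) * (y - z)) := ⟨_, rfl⟩
  obtain ⟨c2, hc2⟩ : ∃ t, t = (b 2 - (x + y) * b 1 + x * y * b 0) / ((x - z) * (y - z)) := ⟨_, rfl⟩
  have p0 : b 0 = c0 + c1 + c2 := by
    rw [hc0, hc1, hc2]; field_simp; ring
  have p1 : b 1 = c0 * x + c1 * y + c2 * z := by
    rw [hc0, hc1, hc2]; field_simp; ring
  have p2 : b 2 = c0 * x ^ 2 + c1 * y ^ 2 + c2 * z ^ 2 := by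
    rw [hc0, hc1, hc2]; field_simp; ring
  clear hc0 hc1 hc2
  rw [p0, p1, p2] at q3
  rw [q3, p1, p2] at q4
  rw [q4, q3, p2] at q5
  refine ⟨![c0, c1, c2], ![x, y, z], ?_⟩
  funext i
  fin_cases i <;> simp [momSum, Fin.sum_univ_three]
  · exact p0
  · exact p1
  · exact p2
  · rw [q3]; ring
  · rw [q4]; ring
  · rw [q5]; ring


/-- The normalised coefficients `10 a_i / C(5,i)` as polynomials in the `a_i`. -/
def bPoly : Fin 6 → MvPolynomial (Fin 6) ℂ := fun i => C (bw i) * X i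

/-- The normalised coefficients `10 a_i / C(5,i)` of the quintic with coefficients `a_i`. -/
def bOf (a : Fin 6 → ℂ) : Fin 6 → ℂ := fun i => bw i * a i

lemma eval_bPoly (a : Fin 6 → ℂ) (i : Fin 6) : eval a (bPoly i) = bOf a i := by
  simp [bPoly, bOf]

lemma eval_can3 (a : Fin 6 → ℂ) : eval a (can3 bPoly) = can3 (bOf a) := by
  simp [can3, det3, eval_bPoly]
lemma eval_invJ (a : Fin 6 → ℂ) : eval a (invJ bPoly) = invJ (bOf a) := by
  simp [invJ, covA, covB, covC, eval_bPoly]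
lemma eval_invK (a : Fin 6 → ℂ) : eval a (invK bPoly) = invK (bOf a) := by
  simp [invK, covA, covB, covC, can0, can1, can2, can3, det3, eval_bPoly]
lemma eval_invL (a : Fin 6 → ℂ) : eval a (invL bPoly) = invL (bOf a) := by
  simp [invL, can0, can1, can2, can3, det3, eval_bPoly]

/-- An invariant of degree `48` is a polynomial in `J`, `K`, `L`: this holds where `can3` and `L` do
not vanish, hence identically. -/
lemma exists_JKL {P : MvPolynomial (Fin 6) ℂ} (hP : P.IsHomogeneous 48)
    (hinv : IsInvariantPoly P) : ∃ R : MvPolynomial (Fin 3) ℂ, ∀ a : Fin 6 → ℂ,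
      eval a P = eval ![invJ (bOf a), invK (bOf a), invL (bOf a)] R := by
  obtain ⟨R, hR⟩ := exists_JKL_of_sumForm hP hinv
  have hev : ∀ a, eval a (aeval ![invJ bPoly, invK bPoly, invL bPoly] R)
      = eval ![invJ (bOf a), invK (bOf a), invL (bOf a)] R := by
    intro a
    have : (eval a).comp (aeval (R := ℂ) ![invJ bPoly, invK bPoly, invL bPoly]).toRingHom
        = eval ![invJ (bOf a), invK (bOf a), invL (bOf a)] := by
      apply MvPolynomial.ringHom_ext
      · intro r; simp
      · intro i
        fin_cases i <;> simp [eval_invJ, eval_invK, eval_invL]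
    exact DFunLike.congr_fun this R
  refine ⟨R, fun a => ?_⟩
  rw [← hev]
  congr 1
  have hne : can3 bPoly * invL bPoly ≠ 0 := by
    intro h
    have := congrArg (eval ![3 / 10, 0, 2, 0, 1, 0]) h
    rw [map_mul, eval_can3, eval_invL, map_zero] at this
    have hb : bOf ![3 / 10, 0, 2, 0, 1, 0] = momSum ![1, 1, 1] ![0, 1, -1] := by
      funext i
      fin_cases i <;> simp [bOf, bw, momSum, Fin.sum_univ_three] <;> norm_num
    rw [hb, can3_momSum, ← symE_momSum] at this
    simp [vand, symE, Uvec, br] at this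
    norm_num at this
  apply mul_left_cancel₀ hne
  refine MvPolynomial.funext fun a => ?_
  simp only [map_mul, eval_can3, eval_invL]
  by_cases h3 : can3 (bOf a) = 0
  · simp [h3]
  by_cases hL : invL (bOf a) = 0
  · simp [hL]
  congr 1
  rw [hev]
  obtain ⟨c, μ, hb⟩ := exists_momSum (bOf a) h3 hL
  have ha : a = sumForm c fun k => ![1, μ k] := by
    funext i
    have := congrFun hb i
    have h1 : binw i * bw i = 1 := by fin_cases i <;> norm_num [binw, bw]
    have h2 : sumForm c (fun k => ![1, μ k]) i = binw i * momSum c μ i := by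
      simp [sumForm, momSum]
    rw [h2, ← this, bOf, ← mul_assoc, h1, one_mul]
  have hE : symE (Uvec c fun k => ![1, μ k]) ≠ 0 := by
    intro h
    apply hL
    rw [hb, ← symE_momSum, h]; simp
  have := hR c _ hE
  rw [← ha, symJ_momSum, symK_momSum, symE_momSum, ← hb] at this
  exact this

lemma invJ_smul (t : ℂ) (b : Fin 6 → ℂ) : invJ (t • b) = t ^ 4 * invJ b := by
  simp [invJ, covA, covB, covC]; ring
lemma can0_smul (t : ℂ) (b : Fin 6 → ℂ) : can0 (t • b) = t ^ 3 * can0 b := by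
  simp [can0, det3]; ring
lemma can1_smul (t : ℂ) (b : Fin 6 → ℂ) : can1 (t • b) = t ^ 3 * can1 b := by
  simp [can1, det3]; ring
lemma can2_smul (t : ℂ) (b : Fin 6 → ℂ) : can2 (t • b) = t ^ 3 * can2 b := by
  simp [can2, det3]; ring
lemma can3_smul (t : ℂ) (b : Fin 6 → ℂ) : can3 (t • b) = t ^ 3 * can3 b := by
  simp [can3, det3]; ring
lemma invK_smul (t : ℂ) (b : Fin 6 → ℂ) : invK (t • b) = t ^ 8 * invK b := by
  simp only [invK, can0_smul, can1_smul, can2_smul, can3_smul]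
  simp [covA, covB, covC]; ring
lemma invL_smul (t : ℂ) (b : Fin 6 → ℂ) : invL (t • b) = t ^ 12 * invL b := by
  simp only [invL, can0_smul, can1_smul, can2_smul, can3_smul]; ring

/-- An invariant of degree `48` is a linear combination of the monomials `J^i K^j L^k` of degree
`4i + 8j + 12k = 48`. -/
lemma exists_JKL_homogeneous {P : MvPolynomial (Fin 6) ℂ} (hP : P.IsHomogeneous 48)
    (hinv : IsInvariantPoly P) : ∃ (s : Finset (Fin 3 →₀ ℕ)) (r : (Fin 3 →₀ ℕ) → ℂ),
      (∀ m ∈ s, m 0 + 2 * m 1 + 3 * m 2 = 12) ∧ ∀ a : Fin 6 → ℂ,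
      eval a P = ∑ m ∈ s, r m * (invJ (bOf a) ^ m 0 * invK (bOf a) ^ m 1 * invL (bOf a) ^ m 2) := by
  obtain ⟨R, hR⟩ := exists_JKL hP hinv
  refine ⟨R.support.filter fun m => m 0 + 2 * m 1 + 3 * m 2 = 12, fun m => coeff m R,
    fun m hm => (Finset.mem_filter.1 hm).2, fun a => ?_⟩
  have hpoly : (Polynomial.C (eval a P) * Polynomial.X ^ 48 : Polynomial ℂ)
      = ∑ m ∈ R.support, Polynomial.C (coeff m R *
        (invJ (bOf a) ^ m 0 * invK (bOf a) ^ m 1 * invL (bOf a) ^ m 2)) *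
        Polynomial.X ^ (4 * (m 0 + 2 * m 1 + 3 * m 2)) := by
    refine Polynomial.funext fun t => ?_
    have h1 := hR (t • a)
    have h2 : bOf (t • a) = t • bOf a := by
      funext i; simp [bOf]; ring
    rw [eval_smul_of_homogeneous hP, h2, invJ_smul, invK_smul, invL_smul] at h1
    simp only [Polynomial.eval_mul, Polynomial.eval_C, Polynomial.eval_pow, Polynomial.eval_X,
      Polynomial.eval_finset_sum]
    rw [mul_comm, h1, eval_eq']
    refine Finset.sum_congr rfl fun m _ => ?_
    simp [Fin.prod_univ_three]
    ring
  have h48 := congrArg (fun p => Polynomial.coeff p 48) hpoly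
  simp only [Polynomial.coeff_C_mul_X_pow, Polynomial.finset_sum_coeff, if_true] at h48
  rw [h48, Finset.sum_filter]
  refine Finset.sum_congr rfl fun m _ => ?_
  congr 1
  exact propext ⟨fun h => by omega, fun h => by omega⟩

/-! ### Identities for the quintics with roots `∞, 0, x, y, z` -/

/-- The degree `4` invariant of the quintic with roots `∞, 0` and the three roots of `t³ - e₁t² + e₂t - e₃`. -/
def slJ (e1 e2 e3 : ℂ) : ℂ :=
  144 * e3 ^ 2 + 96 * e2 ^ 3 - 304 * e1 * e2 * e3 - 32 * e1 ^ 2 * e2 ^ 2 + 96 * e1 ^ 3 * e3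
/-- The degree `8` invariant of the same quintic. -/
def slK (e1 e2 e3 : ℂ) : ℂ :=
  6912 * e3 ^ 4 + 1216 * e2 ^ 3 * e3 ^ 2 + 72 * e2 ^ 6 - 5184 * e1 * e2 * e3 ^ 3 - 456 * e1
    * e2 ^ 4 * e3 + 400 * e1 ^ 2 * e2 ^ 2 * e3 ^ 2 - 48 * e1 ^ 2 * e2 ^ 5 + 1216 * e1 ^ 3 *
    e3 ^ 3 + 296 * e1 ^ 3 * e2 ^ 3 * e3 - 456 * e1 ^ 4 * e2 * e3 ^ 2 + 8 * e1 ^ 4 * e2 ^ 4 -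
    48 * e1 ^ 5 * e2 ^ 2 * e3 + 72 * e1 ^ 6 * e3 ^ 2
/-- The degree `12` invariant of the same quintic. -/
def slL (e1 e2 e3 : ℂ) : ℂ :=
  -110592 * e3 ^ 6 - 16384 * e2 ^ 3 * e3 ^ 4 - 256 * e2 ^ 6 * e3 ^ 2 + 32 * e2 ^ 9 + 239616
    * e1 * e2 * e3 ^ 5 + 31488 * e1 * e2 ^ 4 * e3 ^ 3 + 896 * e1 * e2 ^ 7 * e3 - 182528 * e1
    ^ 2 * e2 ^ 2 * e3 ^ 4 - 17600 * e1 ^ 2 * e2 ^ 5 * e3 ^ 2 - 332 * e1 ^ 2 * e2 ^ 8 - 16384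
    * e1 ^ 3 * e3 ^ 5 + 55424 * e1 ^ 3 * e2 ^ 3 * e3 ^ 3 + 2832 * e1 ^ 3 * e2 ^ 6 * e3 +
    31488 * e1 ^ 4 * e2 * e3 ^ 4 - 2224 * e1 ^ 4 * e2 ^ 4 * e3 ^ 2 + 144 * e1 ^ 4 * e2 ^ 7 -
    17600 * e1 ^ 5 * e2 ^ 2 * e3 ^ 3 - 1320 * e1 ^ 5 * e2 ^ 5 * e3 - 256 * e1 ^ 6 * e3 ^ 4 +
    2832 * e1 ^ 6 * e2 ^ 3 * e3 ^ 2 - 16 * e1 ^ 6 * e2 ^ 6 + 896 * e1 ^ 7 * e2 * e3 ^ 3 +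
    144 * e1 ^ 7 * e2 ^ 4 * e3 - 332 * e1 ^ 8 * e2 ^ 2 * e3 ^ 2 + 32 * e1 ^ 9 * e3 ^ 3
/-- The discriminant of the cubic `t³ - e₁t² + e₂t - e₃`. -/
def slD (e1 e2 e3 : ℂ) : ℂ :=
  -27 * e3 ^ 2 - 4 * e2 ^ 3 + 18 * e1 * e2 * e3 + e1 ^ 2 * e2 ^ 2 - 4 * e1 ^ 3 * e3
/-- The product of `y² - yz + z²` over the pairs of roots of the cubic. -/
def slN (e1 e2 e3 : ℂ) : ℂ :=
  -8 * e3 ^ 2 - 3 * e2 ^ 3 + 10 * e1 * e2 * e3 + e1 ^ 2 * e2 ^ 2 - 3 * e1 ^ 3 * e3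
/-- The sum over the three quartics omitting a root of the cubic of the discriminant of one times
the product of `(12 S)³` of the other two. -/
def slP (e1 e2 e3 : ℂ) : ℂ :=
  -576 * e3 ^ 6 + 168 * e2 ^ 3 * e3 ^ 4 + 19 * e2 ^ 6 * e3 ^ 2 - 4 * e2 ^ 9 + 784 * e1 * e2
    * e3 ^ 5 + 34 * e1 * e2 ^ 4 * e3 ^ 3 + 46 * e1 * e2 ^ 7 * e3 - 1044 * e1 ^ 2 * e2 ^ 2 *
    e3 ^ 4 - 269 * e1 ^ 2 * e2 ^ 5 * e3 ^ 2 + e1 ^ 2 * e2 ^ 8 + 168 * e1 ^ 3 * e3 ^ 5 + 667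
    * e1 ^ 3 * e2 ^ 3 * e3 ^ 3 - 11 * e1 ^ 3 * e2 ^ 6 * e3 + 34 * e1 ^ 4 * e2 * e3 ^ 4 + 89
    * e1 ^ 4 * e2 ^ 4 * e3 ^ 2 - 269 * e1 ^ 5 * e2 ^ 2 * e3 ^ 3 + 19 * e1 ^ 6 * e3 ^ 4 - 11
    * e1 ^ 6 * e2 ^ 3 * e3 ^ 2 + 46 * e1 ^ 7 * e2 * e3 ^ 3 + e1 ^ 8 * e2 ^ 2 * e3 ^ 2 - 4 *
    e1 ^ 9 * e3 ^ 3
/-- The sum over the three quartics omitting a root of the cubic of `(12 S)³` of one times the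
product of the discriminants of the other two. -/
def slQ (e1 e2 e3 : ℂ) : ℂ :=
  -216 * e3 ^ 6 + 19 * e2 ^ 3 * e3 ^ 4 + 8 * e2 ^ 6 * e3 ^ 2 + 72 * e1 * e2 * e3 ^ 5 - 48 *
    e1 * e2 ^ 4 * e3 ^ 3 + 36 * e1 ^ 2 * e2 ^ 2 * e3 ^ 4 - 6 * e1 ^ 2 * e2 ^ 5 * e3 ^ 2 + 19
    * e1 ^ 3 * e3 ^ 5 + 37 * e1 ^ 3 * e2 ^ 3 * e3 ^ 3 - 48 * e1 ^ 4 * e2 * e3 ^ 4 + e1 ^ 4 *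
    e2 ^ 4 * e3 ^ 2 - 6 * e1 ^ 5 * e2 ^ 2 * e3 ^ 3 + 8 * e1 ^ 6 * e3 ^ 4
/-- `12 S` for the quartic that omits the root `∞`. -/
def sl1 (e1 e2 e3 : ℂ) : ℂ := e2 ^ 2 - 3 * e1 * e3
/-- `12 S` for the quartic that omits the root `0`. -/
def sl2 (e1 e2 _e3 : ℂ) : ℂ := e1 ^ 2 - 3 * e2
/-- The lemmas `slice0`, …, `slice5` express the products defining `6912⁵ B_k`, written in the
elementary symmetric functions of the three finite nonzero roots, as combinations of the monomials
of degree `24` in `J`, `K`, `L`. -/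
lemma slice0 (e1 e2 e3 : ℂ) :
    14348907 * (slD e1 e2 e3 ^ 2 * e3 ^ 2) * (slD e1 e2 e3 * e3 ^ 4) = (14348907 /
      32768000000000) * (slJ e1 e2 e3 ^ 6) + (-43046721 / 256000000000) * (slJ e1 e2 e3 ^ 4 *
      slK e1 e2 e3) + (43046721 / 2000000000) * (slJ e1 e2 e3 ^ 2 * slK e1 e2 e3 ^ 2) +
      (-14348907 / 15625000) * (slK e1 e2 e3 ^ 3) := by
  have h : slJ e1 e2 e3 ^ 2 - 128 * slK e1 e2 e3 = 32000 * (slD e1 e2 e3 * e3 ^ 2) := by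
    simp only [slJ, slK, slD]; ring
  linear_combination (-14348907 / 32768000000000) * ((slJ e1 e2 e3 ^ 2 - 128 * slK e1 e2 e3) ^ 2 +
    (slJ e1 e2 e3 ^ 2 - 128 * slK e1 e2 e3) * (32000 * (slD e1 e2 e3 * e3 ^ 2)) +
    (32000 * (slD e1 e2 e3 * e3 ^ 2)) ^ 2) * h

lemma slice1 (e1 e2 e3 : ℂ) :
    -2125764 * (slD e1 e2 e3 ^ 2 * e3 ^ 2) * slQ e1 e2 e3 - 2125764 * (slD e1 e2 e3 * (e3 ^ 2
      * sl2 e1 e2 e3 ^ 3 + sl1 e1 e2 e3 ^ 3)) * (slD e1 e2 e3 * e3 ^ 4) = (-531441 /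
      204800000000) * (slJ e1 e2 e3 ^ 6) + (37732311 / 51200000000) * (slJ e1 e2 e3 ^ 4 * slK
      e1 e2 e3) + (-12223143 / 200000000) * (slJ e1 e2 e3 ^ 2 * slK e1 e2 e3 ^ 2) + (3720087 /
      3125000) * (slK e1 e2 e3 ^ 3) := by
  simp only [slJ, slK, slL, slD, slN, slP, slQ, sl1, sl2]
  ring

lemma slice2 (e1 e2 e3 : ℂ) :
    314928 * (slD e1 e2 e3 ^ 2 * e3 ^ 2) * slP e1 e2 e3 + 314928 * (slD e1 e2 e3 * (e3 ^ 2 *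
      sl2 e1 e2 e3 ^ 3 + sl1 e1 e2 e3 ^ 3)) * slQ e1 e2 e3 + 314928 * (sl1 e1 e2 e3 * sl2 e1
      e2 e3) ^ 3 * (slD e1 e2 e3 * e3 ^ 4) = (19683 / 3200000000) * (slJ e1 e2 e3 ^ 6) +
      (-7735419 / 6400000000) * (slJ e1 e2 e3 ^ 4 * slK e1 e2 e3) + (2814669 / 50000000) *
      (slJ e1 e2 e3 ^ 2 * slK e1 e2 e3 ^ 2) + (-118098 / 390625) * (slK e1 e2 e3 ^ 3) +
      (-19683 / 3200000) * (slJ e1 e2 e3 ^ 3 * slL e1 e2 e3) + (19683 / 25000) * (slJ e1 e2 e3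
      * slK e1 e2 e3 * slL e1 e2 e3) := by
  simp only [slJ, slK, slL, slD, slN, slP, slQ, sl1, sl2]
  ring

lemma slice3 (e1 e2 e3 : ℂ) :
    -46656 * (slD e1 e2 e3 ^ 2 * e3 ^ 2) * slN e1 e2 e3 ^ 3 - 46656 * (slD e1 e2 e3 * (e3 ^ 2
      * sl2 e1 e2 e3 ^ 3 + sl1 e1 e2 e3 ^ 3)) * slP e1 e2 e3 - 46656 * (sl1 e1 e2 e3 * sl2 e1
      e2 e3) ^ 3 * slQ e1 e2 e3 = (-729 / 100000000) * (slJ e1 e2 e3 ^ 6) + (177147 /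
      200000000) * (slJ e1 e2 e3 ^ 4 * slK e1 e2 e3) + (-620379 / 50000000) * (slJ e1 e2 e3 ^
      2 * slK e1 e2 e3 ^ 2) + (12393 / 390625) * (slK e1 e2 e3 ^ 3) + (8019 / 800000) * (slJ
      e1 e2 e3 ^ 3 * slL e1 e2 e3) + (-2187 / 3125) * (slJ e1 e2 e3 * slK e1 e2 e3 * slL e1 e2
      e3) + (-2916 / 625) * (slL e1 e2 e3 ^ 2) := by
  simp only [slJ, slK, slL, slD, slN, slP, slQ, sl1, sl2]
  ring

lemma slice4 (e1 e2 e3 : ℂ) :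
    6912 * (slD e1 e2 e3 * (e3 ^ 2 * sl2 e1 e2 e3 ^ 3 + sl1 e1 e2 e3 ^ 3)) * slN e1 e2 e3 ^ 3
      + 6912 * (sl1 e1 e2 e3 * sl2 e1 e2 e3) ^ 3 * slP e1 e2 e3 = (27 / 6250000) * (slJ e1 e2
      e3 ^ 6) + (-1593 / 6250000) * (slJ e1 e2 e3 ^ 4 * slK e1 e2 e3) + (-109809 / 25000000) *
      (slJ e1 e2 e3 ^ 2 * slK e1 e2 e3 ^ 2) + (-594 / 390625) * (slK e1 e2 e3 ^ 3) + (-783 /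
      200000) * (slJ e1 e2 e3 ^ 3 * slL e1 e2 e3) + (-243 / 6250) * (slJ e1 e2 e3 * slK e1 e2
      e3 * slL e1 e2 e3) := by
  simp only [slJ, slK, slL, slD, slN, slP, slQ, sl1, sl2]
  ring

lemma slice5 (e1 e2 e3 : ℂ) :
    -1024 * (sl1 e1 e2 e3 * sl2 e1 e2 e3) ^ 3 * slN e1 e2 e3 ^ 3 = (-2 / 1953125) * (slJ e1 e2
      e3 ^ 6) + (18 / 1953125) * (slJ e1 e2 e3 ^ 4 * slK e1 e2 e3) + (-54 / 1953125) * (slJ e1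
      e2 e3 ^ 2 * slK e1 e2 e3 ^ 2) + (54 / 1953125) * (slK e1 e2 e3 ^ 3) := by
  have h : slJ e1 e2 e3 ^ 2 - 3 * slK e1 e2 e3 = 1000 * (sl1 e1 e2 e3 * sl2 e1 e2 e3 * slN e1 e2 e3) := by
    simp only [slJ, slK, slN, sl1, sl2]; ring
  linear_combination (2 / 1953125) * ((slJ e1 e2 e3 ^ 2 - 3 * slK e1 e2 e3) ^ 2 +
    (slJ e1 e2 e3 ^ 2 - 3 * slK e1 e2 e3) * (1000 * (sl1 e1 e2 e3 * sl2 e1 e2 e3 * slN e1 e2 e3)) +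
    (1000 * (sl1 e1 e2 e3 * sl2 e1 e2 e3 * slN e1 e2 e3)) ^ 2) * h

/-! ### Products of the `B_k` span degree `48` -/

/-- Membership in the square of the span of `B₀, …, B₅`, written out with coefficients. -/
lemma exists_of_mem_mul {X : Type*} (B : Fin 6 → X → ℂ) {f : X → ℂ}
    (hf : f ∈ Submodule.span ℂ (Set.range B) * Submodule.span ℂ (Set.range B)) :
    ∃ c : Fin 6 → Fin 6 → ℂ, ∀ x, f x = ∑ i, ∑ j ∈ Finset.Ici i, c i j * (B i x * B j x) := by
  rw [Submodule.span_mul_span] at hf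
  induction hf using Submodule.span_induction with
  | mem f hf =>
    obtain ⟨_, ⟨i, rfl⟩, _, ⟨j, rfl⟩, rfl⟩ := hf
    wlog hij : i ≤ j generalizing i j
    · obtain ⟨c, hc⟩ := this j i (le_of_not_ge hij)
      exact ⟨c, fun x => by rw [← hc x]; exact mul_comm _ _⟩
    refine ⟨fun i' j' => if i' = i ∧ j' = j then 1 else 0, fun x => ?_⟩
    rw [Finset.sum_eq_single i, Finset.sum_eq_single j] <;> simp +contextual [hij]
  | zero => exact ⟨0, fun x => by simp⟩
  | add f g _ _ hf hg =>
    obtain ⟨c, hc⟩ := hf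
    obtain ⟨d, hd⟩ := hg
    exact ⟨c + d, fun x => by simp [hc, hd, add_mul, Finset.sum_add_distrib]⟩
  | smul t f _ hf =>
    obtain ⟨c, hc⟩ := hf
    exact ⟨t • c, fun x => by simp [hc, Finset.mul_sum, mul_assoc]⟩

set_option maxHeartbeats 4000000 in
/-- Products of the six combinations `B_k` of the seven monomials of degree `24` in `J`, `K`, `L` span
all monomials of degree `48`. -/
lemma monomial_mem_mul {X : Type*} (B : Fin 6 → X → ℂ) (J K L : X → ℂ)
    (hB0 : ∀ x, B 0 x = (14348907 / 32768000000000) * (J x ^ 6) + (-43046721 / 256000000000) * (J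
      x ^ 4 * K x) + (43046721 / 2000000000) * (J x ^ 2 * K x ^ 2) + (-14348907 / 15625000) * (K x
      ^ 3))
    (hB1 : ∀ x, B 1 x = (-531441 / 204800000000) * (J x ^ 6) + (37732311 / 51200000000) * (J x ^ 4
      * K x) + (-12223143 / 200000000) * (J x ^ 2 * K x ^ 2) + (3720087 / 3125000) * (K x ^ 3))
    (hB2 : ∀ x, B 2 x = (19683 / 3200000000) * (J x ^ 6) + (-7735419 / 6400000000) * (J x ^ 4 * K
      x) + (2814669 / 50000000) * (J x ^ 2 * K x ^ 2) + (-118098 / 390625) * (K x ^ 3) + (-19683 /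
      3200000) * (J x ^ 3 * L x) + (19683 / 25000) * (J x * K x * L x))
    (hB3 : ∀ x, B 3 x = (-729 / 100000000) * (J x ^ 6) + (177147 / 200000000) * (J x ^ 4 * K x) +
      (-620379 / 50000000) * (J x ^ 2 * K x ^ 2) + (12393 / 390625) * (K x ^ 3) + (8019 / 800000)
      * (J x ^ 3 * L x) + (-2187 / 3125) * (J x * K x * L x) + (-2916 / 625) * (L x ^ 2))
    (hB4 : ∀ x, B 4 x = (27 / 6250000) * (J x ^ 6) + (-1593 / 6250000) * (J x ^ 4 * K x) +
      (-109809 / 25000000) * (J x ^ 2 * K x ^ 2) + (-594 / 390625) * (K x ^ 3) + (-783 / 200000) *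
      (J x ^ 3 * L x) + (-243 / 6250) * (J x * K x * L x))
    (hB5 : ∀ x, B 5 x = (-2 / 1953125) * (J x ^ 6) + (18 / 1953125) * (J x ^ 4 * K x) + (-54 /
      1953125) * (J x ^ 2 * K x ^ 2) + (54 / 1953125) * (K x ^ 3))
    (i j k : ℕ) (h : i + 2 * j + 3 * k = 12) :
    (fun x => J x ^ i * K x ^ j * L x ^ k) ∈
      Submodule.span ℂ (Set.range B) * Submodule.span ℂ (Set.range B) := by
  set U := Submodule.span ℂ (Set.range B) with hU
  have hBU : ∀ k, B k ∈ U := fun k => Submodule.subset_span ⟨k, rfl⟩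
  -- The span `U` is a hyperplane in degree `24`; it contains `m + r L²` for each of the other six
  -- monomials `m`, with the constants `r` below.
  have hE0 : (fun x => J x ^ 6 + (75497472 / 7) * L x ^ 2) ∈ U := by
    have e : (fun x => J x ^ 6 + (75497472 / 7) * L x ^ 2) = (-22923129651200 / 11160261 : ℂ) • B
      0 + (-286470963200 / 137781 : ℂ) • B 1 + (-11114905600 / 5103 : ℂ) • B 2 + (-1310720000 /
      567 : ℂ) • B 3 + (-52428800 / 21 : ℂ) • B 4 + (-26214400 / 7 : ℂ) • B 5 := by
      funext x
      simp only [Pi.add_apply, Pi.smul_apply, smul_eq_mul, hB0, hB1, hB2, hB3, hB4, hB5]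
      ring
    rw [e]
    exact U.add_mem (U.add_mem (U.add_mem (U.add_mem (U.add_mem (U.smul_mem _ (hBU 0)) (U.smul_mem
      _ (hBU 1))) (U.smul_mem _ (hBU 2))) (U.smul_mem _ (hBU 3))) (U.smul_mem _ (hBU 4)))
      (U.smul_mem _ (hBU 5))
  have hE1 : (fun x => J x ^ 4 * K x + (8781824 / 7) * L x ^ 2) ∈ U := by
    have e : (fun x => J x ^ 4 * K x + (8781824 / 7) * L x ^ 2) = (-24009349529600 / 100442349 :
      ℂ) • B 0 + (-11111628800 / 45927 : ℂ) • B 1 + (-11635916800 / 45927 : ℂ) • B 2 +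
      (-1372160000 / 5103 : ℂ) • B 3 + (-54886400 / 189 : ℂ) • B 4 + (-2252800 / 7 : ℂ) • B 5 :=
      by
      funext x
      simp only [Pi.add_apply, Pi.smul_apply, smul_eq_mul, hB0, hB1, hB2, hB3, hB4, hB5]
      ring
    rw [e]
    exact U.add_mem (U.add_mem (U.add_mem (U.add_mem (U.add_mem (U.smul_mem _ (hBU 0)) (U.smul_mem
      _ (hBU 1))) (U.smul_mem _ (hBU 2))) (U.smul_mem _ (hBU 3))) (U.smul_mem _ (hBU 4)))
      (U.smul_mem _ (hBU 5))
  have hE2 : (fun x => J x ^ 2 * K x ^ 2 + (18944) * L x ^ 2) ∈ U := by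
    have e : (fun x => J x ^ 2 * K x ^ 2 + (18944) * L x ^ 2) = (-52353433600 / 14348907 : ℂ) • B
      0 + (-1957580800 / 531441 : ℂ) • B 1 + (-25100800 / 6561 : ℂ) • B 2 + (-2960000 / 729 : ℂ) •
      B 3 + (-118400 / 27 : ℂ) • B 4 + (-4800 : ℂ) • B 5 := by
      funext x
      simp only [Pi.add_apply, Pi.smul_apply, smul_eq_mul, hB0, hB1, hB2, hB3, hB4, hB5]
      ring
    rw [e]
    exact U.add_mem (U.add_mem (U.add_mem (U.add_mem (U.add_mem (U.smul_mem _ (hBU 0)) (U.smul_mem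
      _ (hBU 1))) (U.smul_mem _ (hBU 2))) (U.smul_mem _ (hBU 3))) (U.smul_mem _ (hBU 4)))
      (U.smul_mem _ (hBU 5))
  have hE3 : (fun x => K x ^ 3 + (1536 / 7) * L x ^ 2) ∈ U := by
    have e : (fun x => K x ^ 3 + (1536 / 7) * L x ^ 2) = (-4400742400 / 100442349 : ℂ) • B 0 +
      (-53350400 / 1240029 : ℂ) • B 1 + (-678400 / 15309 : ℂ) • B 2 + (-80000 / 1701 : ℂ) • B 3 +
      (-3200 / 63 : ℂ) • B 4 + (-775 / 14 : ℂ) • B 5 := by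
      funext x
      simp only [Pi.add_apply, Pi.smul_apply, smul_eq_mul, hB0, hB1, hB2, hB3, hB4, hB5]
      ring
    rw [e]
    exact U.add_mem (U.add_mem (U.add_mem (U.add_mem (U.add_mem (U.smul_mem _ (hBU 0)) (U.smul_mem
      _ (hBU 1))) (U.smul_mem _ (hBU 2))) (U.smul_mem _ (hBU 3))) (U.smul_mem _ (hBU 4)))
      (U.smul_mem _ (hBU 5))
  have hE4 : (fun x => J x ^ 3 * L x + (-628736 / 7) * L x ^ 2) ∈ U := by
    have e : (fun x => J x ^ 3 * L x + (-628736 / 7) * L x ^ 2) = (1721348915200 / 100442349 : ℂ)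
      • B 0 + (64495001600 / 3720087 : ℂ) • B 1 + (832537600 / 45927 : ℂ) • B 2 + (98240000 / 5103
      : ℂ) • B 3 + (3884800 / 189 : ℂ) • B 4 + (153600 / 7 : ℂ) • B 5 := by
      funext x
      simp only [Pi.add_apply, Pi.smul_apply, smul_eq_mul, hB0, hB1, hB2, hB3, hB4, hB5]
      ring
    rw [e]
    exact U.add_mem (U.add_mem (U.add_mem (U.add_mem (U.add_mem (U.smul_mem _ (hBU 0)) (U.smul_mem
      _ (hBU 1))) (U.smul_mem _ (hBU 2))) (U.smul_mem _ (hBU 3))) (U.smul_mem _ (hBU 4)))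
      (U.smul_mem _ (hBU 5))
  have hE5 : (fun x => J x * K x * L x + (-912 / 7) * L x ^ 2) ∈ U := by
    have e : (fun x => J x * K x * L x + (-912 / 7) * L x ^ 2) = (904908800 / 33480783 : ℂ) • B 0
      + (100899200 / 3720087 : ℂ) • B 1 + (3787600 / 137781 : ℂ) • B 2 + (47500 / 1701 : ℂ) • B 3
      + (5350 / 189 : ℂ) • B 4 + (200 / 7 : ℂ) • B 5 := by
      funext x
      simp only [Pi.add_apply, Pi.smul_apply, smul_eq_mul, hB0, hB1, hB2, hB3, hB4, hB5]
      ring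
    rw [e]
    exact U.add_mem (U.add_mem (U.add_mem (U.add_mem (U.add_mem (U.smul_mem _ (hBU 0)) (U.smul_mem
      _ (hBU 1))) (U.smul_mem _ (hBU 2))) (U.smul_mem _ (hBU 3))) (U.smul_mem _ (hBU 4)))
      (U.smul_mem _ (hBU 5))
  -- A coincidence `m₁m₂ = m₃m₄` among monomials makes the degree `48` part cancel in a difference of
  -- products of elements `m + r L²`, leaving a combination of multiples of `L²`.
  have hR0 : (fun x => (18944) * (J x ^ 6 * L x ^ 2) + (-17563648 / 7) * (J x ^ 4 * K x * L x ^ 2)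
    + (75497472 / 7) * (J x ^ 2 * K x ^ 2 * L x ^ 2) + (-67108864000000 / 49) * (L x ^ 2 * L x ^
    2)) ∈ U * U := by
    convert (U * U).sub_mem (Submodule.mul_mem_mul hE0 hE2) (Submodule.mul_mem_mul hE1 hE1) using
      1
    funext x
    simp only [Pi.sub_apply, Pi.mul_apply]
    ring
  have hR1 : (fun x => (1536 / 7) * (J x ^ 6 * L x ^ 2) + (-18944) * (J x ^ 4 * K x * L x ^ 2) +
    (-8781824 / 7) * (J x ^ 2 * K x ^ 2 * L x ^ 2) + (75497472 / 7) * (K x ^ 3 * L x ^ 2) +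
    (-1048576000000 / 49) * (L x ^ 2 * L x ^ 2)) ∈ U * U := by
    convert (U * U).sub_mem (Submodule.mul_mem_mul hE0 hE3) (Submodule.mul_mem_mul hE1 hE2) using
      1
    funext x
    simp only [Pi.sub_apply, Pi.mul_apply]
    ring
  have hR2 : (fun x => (1536 / 7) * (J x ^ 4 * K x * L x ^ 2) + (-37888) * (J x ^ 2 * K x ^ 2 * L
    x ^ 2) + (8781824 / 7) * (K x ^ 3 * L x ^ 2) + (-4096000000 / 49) * (L x ^ 2 * L x ^ 2)) ∈ U *
    U := by
    convert (U * U).sub_mem (Submodule.mul_mem_mul hE1 hE3) (Submodule.mul_mem_mul hE2 hE2) using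
      1
    funext x
    simp only [Pi.sub_apply, Pi.mul_apply]
    ring
  have hR3 : (fun x => (-912 / 7) * (J x ^ 6 * L x ^ 2) + (628736 / 7) * (J x ^ 4 * K x * L x ^ 2)
    + (-8781824 / 7) * (J x ^ 3 * L x * L x ^ 2) + (75497472 / 7) * (J x * K x * L x * L x ^ 2) +
    (5452595200000 / 49) * (L x ^ 2 * L x ^ 2)) ∈ U * U := by
    convert (U * U).sub_mem (Submodule.mul_mem_mul hE0 hE5) (Submodule.mul_mem_mul hE1 hE4) using
      1
    funext x
    simp only [Pi.sub_apply, Pi.mul_apply]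
    ring
  have hR4 : (fun x => (-912 / 7) * (J x ^ 4 * K x * L x ^ 2) + (628736 / 7) * (J x ^ 2 * K x ^ 2
    * L x ^ 2) + (-18944) * (J x ^ 3 * L x * L x ^ 2) + (8781824 / 7) * (J x * K x * L x * L x ^
    2) + (75366400000 / 49) * (L x ^ 2 * L x ^ 2)) ∈ U * U := by
    convert (U * U).sub_mem (Submodule.mul_mem_mul hE1 hE5) (Submodule.mul_mem_mul hE2 hE4) using
      1
    funext x
    simp only [Pi.sub_apply, Pi.mul_apply]
    ring
  have hR5 : (fun x => (-912 / 7) * (J x ^ 2 * K x ^ 2 * L x ^ 2) + (628736 / 7) * (K x ^ 3 * L x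
    ^ 2) + (-1536 / 7) * (J x ^ 3 * L x * L x ^ 2) + (18944) * (J x * K x * L x * L x ^ 2) +
    (844800000 / 49) * (L x ^ 2 * L x ^ 2)) ∈ U * U := by
    convert (U * U).sub_mem (Submodule.mul_mem_mul hE2 hE5) (Submodule.mul_mem_mul hE3 hE4) using
      1
    funext x
    simp only [Pi.sub_apply, Pi.mul_apply]
    ring
  have hR6 : (fun x => (1) * (J x ^ 6 * L x ^ 2) + (-1257472 / 7) * (J x ^ 3 * L x * L x ^ 2) +
    (395308957696 / 49) * (L x ^ 2 * L x ^ 2)) ∈ U * U := by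
    convert Submodule.mul_mem_mul hE4 hE4 using 1
    funext x
    simp only [Pi.sub_apply, Pi.mul_apply]
    ring
  have hR7 : (fun x => (1) * (J x ^ 4 * K x * L x ^ 2) + (-912 / 7) * (J x ^ 3 * L x * L x ^ 2) +
    (-628736 / 7) * (J x * K x * L x * L x ^ 2) + (573407232 / 49) * (L x ^ 2 * L x ^ 2)) ∈ U * U
    := by
    convert Submodule.mul_mem_mul hE4 hE5 using 1
    funext x
    simp only [Pi.sub_apply, Pi.mul_apply]
    ring
  have hR8 : (fun x => (1) * (J x ^ 2 * K x ^ 2 * L x ^ 2) + (-1824 / 7) * (J x * K x * L x * L x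
    ^ 2) + (831744 / 49) * (L x ^ 2 * L x ^ 2)) ∈ U * U := by
    convert Submodule.mul_mem_mul hE5 hE5 using 1
    funext x
    simp only [Pi.sub_apply, Pi.mul_apply]
    ring
  -- These relations, seven of which are independent, are solved for the products `m L²`.
  have hy0 : (fun x => J x ^ 6 * L x ^ 2) ∈ U * U := by
    convert (U * U).add_mem ((U * U).add_mem ((U * U).add_mem ((U * U).add_mem ((U * U).add_mem
      ((U * U).smul_mem (659743 / 10000000000 : ℂ) hR0) ((U * U).smul_mem (143983 / 78125000 : ℂ)
      hR3)) ((U * U).smul_mem (-154728 / 9765625 : ℂ) hR4)) ((U * U).smul_mem (-189509 / 19531250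
      : ℂ) hR6)) ((U * U).smul_mem (-20158848 / 9765625 : ℂ) hR7)) ((U * U).smul_mem (6948790272 /
      9765625 : ℂ) hR8) using 1
    funext x
    simp only [Pi.add_apply, Pi.smul_apply, smul_eq_mul]
    ring
  have hy1 : (fun x => J x ^ 4 * K x * L x ^ 2) ∈ U * U := by
    convert (U * U).add_mem ((U * U).add_mem ((U * U).add_mem ((U * U).add_mem ((U * U).add_mem
      ((U * U).smul_mem (122493 / 1280000000000 : ℂ) hR0) ((U * U).smul_mem (610057 / 40000000000
      : ℂ) hR3)) ((U * U).smul_mem (-291557 / 312500000 : ℂ) hR4)) ((U * U).smul_mem (217683 /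
      1250000000 : ℂ) hR6)) ((U * U).smul_mem (-2454241 / 9765625 : ℂ) hR7)) ((U * U).smul_mem
      (808279424 / 9765625 : ℂ) hR8) using 1
    funext x
    simp only [Pi.add_apply, Pi.smul_apply, smul_eq_mul]
    ring
  have hy2 : (fun x => J x ^ 2 * K x ^ 2 * L x ^ 2) ∈ U * U := by
    convert (U * U).add_mem ((U * U).add_mem ((U * U).add_mem ((U * U).add_mem ((U * U).add_mem
      ((U * U).smul_mem (22743 / 163840000000000 : ℂ) hR0) ((U * U).smul_mem (103341 /
      2560000000000 : ℂ) hR3)) ((U * U).smul_mem (-26733 / 10000000000 : ℂ) hR4)) ((U *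
      U).smul_mem (841491 / 320000000000 : ℂ) hR6)) ((U * U).smul_mem (-4532241 / 1250000000 : ℂ)
      hR7)) ((U * U).smul_mem (24191741 / 19531250 : ℂ) hR8) using 1
    funext x
    simp only [Pi.add_apply, Pi.smul_apply, smul_eq_mul]
    ring
  have hy3 : (fun x => K x ^ 3 * L x ^ 2) ∈ U * U := by
    convert (U * U).add_mem ((U * U).add_mem ((U * U).add_mem ((U * U).add_mem ((U * U).add_mem
      ((U * U).add_mem ((U * U).smul_mem (-4865973 / 4096000000000000 : ℂ) hR0) ((U * U).smul_mem
      (420095669 / 4096000000000000 : ℂ) hR1)) ((U * U).smul_mem (-156891169 / 32000000000000 : ℂ)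
      hR2)) ((U * U).smul_mem (-112437 / 204800000000 : ℂ) hR4)) ((U * U).smul_mem (107677 /
      1600000000 : ℂ) hR5)) ((U * U).smul_mem (-42901 / 1280000000 : ℂ) hR7)) ((U * U).smul_mem
      (69013 / 5000000 : ℂ) hR8) using 1
    funext x
    simp only [Pi.add_apply, Pi.smul_apply, smul_eq_mul]
    ring
  have hy4 : (fun x => J x ^ 3 * L x * L x ^ 2) ∈ U * U := by
    convert (U * U).add_mem ((U * U).add_mem ((U * U).add_mem ((U * U).add_mem ((U * U).add_mem
      ((U * U).smul_mem (15043 / 20480000000000 : ℂ) hR0) ((U * U).smul_mem (-109361 /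
      1280000000000 : ℂ) hR3)) ((U * U).smul_mem (658861 / 10000000000 : ℂ) hR4)) ((U *
      U).smul_mem (-2003693 / 80000000000 : ℂ) hR6)) ((U * U).smul_mem (707071 / 39062500 : ℂ)
      hR7)) ((U * U).smul_mem (-57868886 / 9765625 : ℂ) hR8) using 1
    funext x
    simp only [Pi.add_apply, Pi.smul_apply, smul_eq_mul]
    ring
  have hy5 : (fun x => J x * K x * L x * L x ^ 2) ∈ U * U := by
    convert (U * U).add_mem ((U * U).add_mem ((U * U).add_mem ((U * U).add_mem ((U * U).add_mem
      ((U * U).smul_mem (2793 / 2621440000000000 : ℂ) hR0) ((U * U).smul_mem (2639 /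
      163840000000000 : ℂ) hR3)) ((U * U).smul_mem (109361 / 1280000000000 : ℂ) hR4)) ((U *
      U).smul_mem (-185193 / 10240000000000 : ℂ) hR6)) ((U * U).smul_mem (247159 / 20000000000 :
      ℂ) hR7)) ((U * U).smul_mem (-4803443 / 625000000 : ℂ) hR8) using 1
    funext x
    simp only [Pi.add_apply, Pi.smul_apply, smul_eq_mul]
    ring
  have hy6 : (fun x => L x ^ 2 * L x ^ 2) ∈ U * U := by
    convert (U * U).add_mem ((U * U).add_mem ((U * U).add_mem ((U * U).add_mem ((U * U).add_mem
      ((U * U).smul_mem (343 / 41943040000000000 : ℂ) hR0) ((U * U).smul_mem (-2793 /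
      1310720000000000 : ℂ) hR3)) ((U * U).smul_mem (15043 / 10240000000000 : ℂ) hR4)) ((U *
      U).smul_mem (-17717 / 40960000000000 : ℂ) hR6)) ((U * U).smul_mem (129059 / 320000000000 :
      ℂ) hR7)) ((U * U).smul_mem (-82523 / 625000000 : ℂ) hR8) using 1
    funext x
    simp only [Pi.add_apply, Pi.smul_apply, smul_eq_mul]
    ring
  have hk : k ≤ 4 := by lia
  have hj : j ≤ 6 := by lia
  interval_cases k <;> interval_cases j <;> try lia
  · obtain rfl : i = 12 := by lia
    convert (U * U).sub_mem (Submodule.mul_mem_mul hE0 hE0) ((U * U).add_mem ((U * U).add_mem ((U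
      * U).smul_mem (75497472 / 7 : ℂ) hy0) ((U * U).smul_mem (75497472 / 7 : ℂ) hy0)) ((U *
      U).smul_mem (5699868278390784 / 49 : ℂ) hy6)) using 1
    funext x
    simp only [Pi.add_apply, Pi.sub_apply, Pi.mul_apply, Pi.smul_apply, smul_eq_mul]
    ring
  · obtain rfl : i = 10 := by lia
    convert (U * U).sub_mem (Submodule.mul_mem_mul hE0 hE1) ((U * U).add_mem ((U * U).add_mem ((U
      * U).smul_mem (75497472 / 7 : ℂ) hy1) ((U * U).smul_mem (8781824 / 7 : ℂ) hy0)) ((U *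
      U).smul_mem (663005511548928 / 49 : ℂ) hy6)) using 1
    funext x
    simp only [Pi.add_apply, Pi.sub_apply, Pi.mul_apply, Pi.smul_apply, smul_eq_mul]
    ring
  · obtain rfl : i = 8 := by lia
    convert (U * U).sub_mem (Submodule.mul_mem_mul hE1 hE1) ((U * U).add_mem ((U * U).add_mem ((U
      * U).smul_mem (8781824 / 7 : ℂ) hy1) ((U * U).smul_mem (8781824 / 7 : ℂ) hy1)) ((U *
      U).smul_mem (77120432766976 / 49 : ℂ) hy6)) using 1
    funext x
    simp only [Pi.add_apply, Pi.sub_apply, Pi.mul_apply, Pi.smul_apply, smul_eq_mul]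
    ring
  · obtain rfl : i = 6 := by lia
    convert (U * U).sub_mem (Submodule.mul_mem_mul hE1 hE2) ((U * U).add_mem ((U * U).add_mem ((U
      * U).smul_mem (8781824 / 7 : ℂ) hy2) ((U * U).smul_mem (18944 : ℂ) hy1)) ((U * U).smul_mem
      (166362873856 / 7 : ℂ) hy6)) using 1
    funext x
    simp only [Pi.add_apply, Pi.sub_apply, Pi.mul_apply, Pi.smul_apply, smul_eq_mul]
    ring
  · obtain rfl : i = 4 := by lia
    convert (U * U).sub_mem (Submodule.mul_mem_mul hE2 hE2) ((U * U).add_mem ((U * U).add_mem ((U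
      * U).smul_mem (18944 : ℂ) hy2) ((U * U).smul_mem (18944 : ℂ) hy2)) ((U * U).smul_mem
      (358875136 : ℂ) hy6)) using 1
    funext x
    simp only [Pi.add_apply, Pi.sub_apply, Pi.mul_apply, Pi.smul_apply, smul_eq_mul]
    ring
  · obtain rfl : i = 2 := by lia
    convert (U * U).sub_mem (Submodule.mul_mem_mul hE2 hE3) ((U * U).add_mem ((U * U).add_mem ((U
      * U).smul_mem (18944 : ℂ) hy3) ((U * U).smul_mem (1536 / 7 : ℂ) hy2)) ((U * U).smul_mem
      (29097984 / 7 : ℂ) hy6)) using 1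
    funext x
    simp only [Pi.add_apply, Pi.sub_apply, Pi.mul_apply, Pi.smul_apply, smul_eq_mul]
    ring
  · obtain rfl : i = 0 := by lia
    convert (U * U).sub_mem (Submodule.mul_mem_mul hE3 hE3) ((U * U).add_mem ((U * U).add_mem ((U
      * U).smul_mem (1536 / 7 : ℂ) hy3) ((U * U).smul_mem (1536 / 7 : ℂ) hy3)) ((U * U).smul_mem
      (2359296 / 49 : ℂ) hy6)) using 1
    funext x
    simp only [Pi.add_apply, Pi.sub_apply, Pi.mul_apply, Pi.smul_apply, smul_eq_mul]
    ring
  · obtain rfl : i = 9 := by lia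
    convert (U * U).sub_mem (Submodule.mul_mem_mul hE0 hE4) ((U * U).add_mem ((U * U).add_mem ((U
      * U).smul_mem (75497472 / 7 : ℂ) hy4) ((U * U).smul_mem (-628736 / 7 : ℂ) hy0)) ((U *
      U).smul_mem (-47467978555392 / 49 : ℂ) hy6)) using 1
    funext x
    simp only [Pi.add_apply, Pi.sub_apply, Pi.mul_apply, Pi.smul_apply, smul_eq_mul]
    ring
  · obtain rfl : i = 7 := by lia
    convert (U * U).sub_mem (Submodule.mul_mem_mul hE1 hE4) ((U * U).add_mem ((U * U).add_mem ((U
      * U).smul_mem (8781824 / 7 : ℂ) hy4) ((U * U).smul_mem (-628736 / 7 : ℂ) hy1)) ((U *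
      U).smul_mem (-5521448894464 / 49 : ℂ) hy6)) using 1
    funext x
    simp only [Pi.add_apply, Pi.sub_apply, Pi.mul_apply, Pi.smul_apply, smul_eq_mul]
    ring
  · obtain rfl : i = 5 := by lia
    convert (U * U).sub_mem (Submodule.mul_mem_mul hE2 hE4) ((U * U).add_mem ((U * U).add_mem ((U
      * U).smul_mem (18944 : ℂ) hy4) ((U * U).smul_mem (-628736 / 7 : ℂ) hy2)) ((U * U).smul_mem
      (-11910774784 / 7 : ℂ) hy6)) using 1
    funext x
    simp only [Pi.add_apply, Pi.sub_apply, Pi.mul_apply, Pi.smul_apply, smul_eq_mul]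
    ring
  · obtain rfl : i = 3 := by lia
    convert (U * U).sub_mem (Submodule.mul_mem_mul hE3 hE4) ((U * U).add_mem ((U * U).add_mem ((U
      * U).smul_mem (1536 / 7 : ℂ) hy4) ((U * U).smul_mem (-628736 / 7 : ℂ) hy3)) ((U *
      U).smul_mem (-965738496 / 49 : ℂ) hy6)) using 1
    funext x
    simp only [Pi.add_apply, Pi.sub_apply, Pi.mul_apply, Pi.smul_apply, smul_eq_mul]
    ring
  · obtain rfl : i = 1 := by lia
    convert (U * U).sub_mem (Submodule.mul_mem_mul hE3 hE5) ((U * U).add_mem ((U * U).add_mem ((U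
      * U).smul_mem (1536 / 7 : ℂ) hy5) ((U * U).smul_mem (-912 / 7 : ℂ) hy3)) ((U * U).smul_mem
      (-1400832 / 49 : ℂ) hy6)) using 1
    funext x
    simp only [Pi.add_apply, Pi.sub_apply, Pi.mul_apply, Pi.smul_apply, smul_eq_mul]
    ring
  · obtain rfl : i = 6 := by lia
    convert (U * U).sub_mem (Submodule.mul_mem_mul hE4 hE4) ((U * U).add_mem ((U * U).add_mem ((U
      * U).smul_mem (-628736 / 7 : ℂ) hy4) ((U * U).smul_mem (-628736 / 7 : ℂ) hy4)) ((U *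
      U).smul_mem (395308957696 / 49 : ℂ) hy6)) using 1
    funext x
    simp only [Pi.add_apply, Pi.sub_apply, Pi.mul_apply, Pi.smul_apply, smul_eq_mul]
    ring
  · obtain rfl : i = 4 := by lia
    convert (U * U).sub_mem (Submodule.mul_mem_mul hE4 hE5) ((U * U).add_mem ((U * U).add_mem ((U
      * U).smul_mem (-628736 / 7 : ℂ) hy5) ((U * U).smul_mem (-912 / 7 : ℂ) hy4)) ((U *
      U).smul_mem (573407232 / 49 : ℂ) hy6)) using 1
    funext x
    simp only [Pi.add_apply, Pi.sub_apply, Pi.mul_apply, Pi.smul_apply, smul_eq_mul]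
    ring
  · obtain rfl : i = 2 := by lia
    convert (U * U).sub_mem (Submodule.mul_mem_mul hE5 hE5) ((U * U).add_mem ((U * U).add_mem ((U
      * U).smul_mem (-912 / 7 : ℂ) hy5) ((U * U).smul_mem (-912 / 7 : ℂ) hy5)) ((U * U).smul_mem
      (831744 / 49 : ℂ) hy6)) using 1
    funext x
    simp only [Pi.add_apply, Pi.sub_apply, Pi.mul_apply, Pi.smul_apply, smul_eq_mul]
    ring
  · obtain rfl : i = 0 := by lia
    convert hy3 using 1
    funext x
    ring
  · obtain rfl : i = 3 := by lia
    convert hy4 using 1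
    funext x
    ring
  · obtain rfl : i = 1 := by lia
    convert hy5 using 1
    funext x
    ring
  · obtain rfl : i = 0 := by lia
    convert hy6 using 1
    funext x
    ring

/-! ### Bracket formulas for the `B_k` -/

/-- The value `12 S` of a quartic with roots `a, b, c, d`, where `A = (ab)(cd)` and `B = (ac)(db)`. -/
def quarticE (A B : ℂ) : ℂ := A ^ 2 + A * B + B ^ 2

/-- The value `256 (S³ - 27T²)`, that is, the discriminant, of a quartic with roots `a, b, c, d`,
where `A = (ab)(cd)` and `B = (ac)(db)`; note `A + B = -(ad)(bc)`. -/
def quarticD (A B : ℂ) : ℂ := (A * B * (A + B)) ^ 2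

lemma lin_mul_lin (a b c d : Fin 2 → ℂ) : lin a * lin b * lin c * lin d =
    C (a 1 * b 1 * c 1 * d 1) * X 0 ^ 4 * X 1 ^ 0 +
    C (-(a 0 * b 1 * c 1 * d 1 + a 1 * b 0 * c 1 * d 1 + a 1 * b 1 * c 0 * d 1
      + a 1 * b 1 * c 1 * d 0)) * X 0 ^ 3 * X 1 ^ 1 +
    C (a 0 * b 0 * c 1 * d 1 + a 0 * b 1 * c 0 * d 1 + a 0 * b 1 * c 1 * d 0
      + a 1 * b 0 * c 0 * d 1 + a 1 * b 0 * c 1 * d 0 + a 1 * b 1 * c 0 * d 0) * X 0 ^ 2 * X 1 ^ 2 +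
    C (-(a 1 * b 0 * c 0 * d 0 + a 0 * b 1 * c 0 * d 0 + a 0 * b 0 * c 1 * d 0
      + a 0 * b 0 * c 0 * d 1)) * X 0 ^ 1 * X 1 ^ 3 +
    C (a 0 * b 0 * c 0 * d 0) * X 0 ^ 0 * X 1 ^ 4 := by
  refine MvPolynomial.funext fun x => ?_
  simp only [lin, map_add, map_sub, map_mul, map_pow, eval_C, eval_X]
  ring

lemma Sq_lin_s7 (a b c d : Fin 2 → ℂ) : Sq (lin a * lin b * lin c * lin d) =
    quarticE (br a b * br c d) (br a c * br d b) / 12 := by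
  rw [lin_mul_lin]
  simp only [Sq, mcoeff_add, mcoeff_mono_s7]
  norm_num
  simp only [quarticE, br]
  ring

lemma Tq_lin (a b c d : Fin 2 → ℂ) :
    27 * Tq (lin a * lin b * lin c * lin d) ^ 2 =
    (quarticE (br a b * br c d) (br a c * br d b) / 12) ^ 3 -
      quarticD (br a b * br c d) (br a c * br d b) / 256 := by
  have h : Tq (lin a * lin b * lin c * lin d) =
      (br a c * br d b - br a b * br c d) * (br a b * br c d + 2 * (br a c * br d b)) *
      (2 * (br a b * br c d) + br a c * br d b) / 432 := by
    rw [lin_mul_lin]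
    simp only [Tq, mcoeff_add, mcoeff_mono_s7]
    norm_num
    simp only [br]
    ring
  rw [h]
  simp only [quarticE, quarticD]
  ring

/-- The coefficients of `∏ (d_i z - s_i)` from `z⁵` down to `z⁰`, with the first two factors and the
last three grouped. -/
def bval (d s : Fin 5 → ℂ) : Fin 6 → ℂ :=
  ![d 0 * d 1 * (d 2 * d 3 * d 4),
    -(d 0 * d 1 * (d 2 * d 3 * s 4 + d 2 * s 3 * d 4 + s 2 * d 3 * d 4)
      + (d 0 * s 1 + s 0 * d 1) * (d 2 * d 3 * d 4)),
    d 0 * d 1 * (d 2 * s 3 * s 4 + s 2 * d 3 * s 4 + s 2 * s 3 * d 4)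
      + (d 0 * s 1 + s 0 * d 1) * (d 2 * d 3 * s 4 + d 2 * s 3 * d 4 + s 2 * d 3 * d 4)
      + s 0 * s 1 * (d 2 * d 3 * d 4),
    -(d 0 * d 1 * (s 2 * s 3 * s 4)
      + (d 0 * s 1 + s 0 * d 1) * (d 2 * s 3 * s 4 + s 2 * d 3 * s 4 + s 2 * s 3 * d 4)
      + s 0 * s 1 * (d 2 * d 3 * s 4 + d 2 * s 3 * d 4 + s 2 * d 3 * d 4)),
    (d 0 * s 1 + s 0 * d 1) * (s 2 * s 3 * s 4)
      + s 0 * s 1 * (d 2 * s 3 * s 4 + s 2 * d 3 * s 4 + s 2 * s 3 * d 4),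
    -(s 0 * s 1 * (s 2 * s 3 * s 4))]

lemma coeff_prod_linear (d s : Fin 5 → ℂ) (k : Fin 6) :
    (∏ i : Fin 5, (Polynomial.C (d i) * Polynomial.X - Polynomial.C (s i))).coeff (5 - (k : ℕ))
      = bval d s k := by
  have h : ∏ i : Fin 5, (Polynomial.C (d i) * Polynomial.X - Polynomial.C (s i)) =
      Polynomial.C (bval d s 0) * Polynomial.X ^ 5 + Polynomial.C (bval d s 1) * Polynomial.X ^ 4
      + Polynomial.C (bval d s 2) * Polynomial.X ^ 3 + Polynomial.C (bval d s 3) * Polynomial.X ^ 2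
      + Polynomial.C (bval d s 4) * Polynomial.X ^ 1
      + Polynomial.C (bval d s 5) * Polynomial.X ^ 0 := by
    refine Polynomial.funext fun x => ?_
    simp only [Fin.prod_univ_five, Polynomial.eval_add, Polynomial.eval_sub, Polynomial.eval_mul,
      Polynomial.eval_C, Polynomial.eval_X, Polynomial.eval_pow]
    simp [bval]
    ring
  rw [h]
  fin_cases k <;> simp [Polynomial.coeff_X_pow]

/-- The pair `((ab)(cd), (ac)(db))` for the four roots `a, b, c, d` left after omission of the `i`-th. -/
def omitPair (l : Fin 5 → Fin 2 → ℂ) : Fin 5 → ℂ × ℂ :=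
  ![(br (l 1) (l 2) * br (l 3) (l 4), br (l 1) (l 3) * br (l 4) (l 2)),
    (br (l 0) (l 2) * br (l 3) (l 4), br (l 0) (l 3) * br (l 4) (l 2)),
    (br (l 0) (l 1) * br (l 3) (l 4), br (l 0) (l 3) * br (l 4) (l 1)),
    (br (l 0) (l 1) * br (l 2) (l 4), br (l 0) (l 2) * br (l 4) (l 1)),
    (br (l 0) (l 1) * br (l 2) (l 3), br (l 0) (l 2) * br (l 3) (l 1))]

lemma exists_quarticOmit (l : Fin 5 → Fin 2 → ℂ) (i : Fin 5) :
    ∃ a b c d, quarticOmit l i = lin a * lin b * lin c * lin d ∧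
      omitPair l i = (br a b * br c d, br a c * br d b) := by
  have key : ∀ a b c d : Fin 5, Finset.univ.erase i = {a, b, c, d} →
      a ∉ ({b, c, d} : Finset (Fin 5)) → b ∉ ({c, d} : Finset (Fin 5)) →
      c ∉ ({d} : Finset (Fin 5)) →
      quarticOmit l i = lin (l a) * lin (l b) * lin (l c) * lin (l d) := by
    intro a b c d h h1 h2 h3
    rw [quarticOmit, h, Finset.prod_insert h1, Finset.prod_insert h2, Finset.prod_insert h3,
      Finset.prod_singleton]
    ring
  fin_cases i
  · exact ⟨_, _, _, _, key 1 2 3 4 (by decide) (by decide) (by decide) (by decide), rfl⟩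
  · exact ⟨_, _, _, _, key 0 2 3 4 (by decide) (by decide) (by decide) (by decide), rfl⟩
  · exact ⟨_, _, _, _, key 0 1 3 4 (by decide) (by decide) (by decide) (by decide), rfl⟩
  · exact ⟨_, _, _, _, key 0 1 2 4 (by decide) (by decide) (by decide) (by decide), rfl⟩
  · exact ⟨_, _, _, _, key 0 1 2 3 (by decide) (by decide) (by decide) (by decide), rfl⟩

/-- The discriminant of the quartic omitting the `i`-th root. -/
def omitD (l : Fin 5 → Fin 2 → ℂ) (i : Fin 5) : ℂ := quarticD (omitPair l i).1 (omitPair l i).2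
/-- The value of `12 S` on the quartic omitting the `i`-th root. -/
def omitE (l : Fin 5 → Fin 2 → ℂ) (i : Fin 5) : ℂ := quarticE (omitPair l i).1 (omitPair l i).2

lemma Binv_eq (l : Fin 5 → Fin 2 → ℂ) (k : Fin 6) :
    Binv l (k : ℕ) = bval (fun i => omitD l i / 256) (fun i => (omitE l i / 12) ^ 3) k := by
  have hR : Rbar l = ∏ i : Fin 5, (Polynomial.C (omitD l i / 256) * Polynomial.X
      - Polynomial.C ((omitE l i / 12) ^ 3)) := ?_
  · rw [← coeff_prod_linear, Binv, hR]
  refine Finset.prod_congr rfl fun i _ => ?_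
  obtain ⟨a, b, c, d, h, h'⟩ := exists_quarticOmit l i
  rw [h, Tq_lin, Sq_lin_s7]
  simp only [omitD, omitE, h', sub_sub_cancel]

lemma bval_mul (u d s : Fin 5 → ℂ) (k : Fin 6) :
    bval (fun i => u i * d i) (fun i => u i * s i) k = (∏ i, u i) * bval d s k := by
  rw [Fin.prod_univ_five]
  fin_cases k <;> simp [bval] <;> ring

/-- Each `B_k` depends on the brackets only and has degree `24` in every root. -/
lemma Binv_scale {l v : Fin 5 → Fin 2 → ℂ} {t : Fin 5 → ℂ}
    (h : ∀ i j, br (l i) (l j) = t i * t j * br (v i) (v j)) (k : Fin 6) :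
    Binv l (k : ℕ) = (∏ i, t i) ^ 24 * Binv v (k : ℕ) := by
  rw [Binv_eq, Binv_eq]
  set u : Fin 5 → ℂ := ![(t 1 * t 2 * t 3 * t 4) ^ 6, (t 0 * t 2 * t 3 * t 4) ^ 6,
    (t 0 * t 1 * t 3 * t 4) ^ 6, (t 0 * t 1 * t 2 * t 4) ^ 6, (t 0 * t 1 * t 2 * t 3) ^ 6] with hu
  have hD : ∀ i, omitD l i / 256 = u i * (omitD v i / 256) := by
    intro i
    fin_cases i <;> simp [omitD, quarticD, omitPair, h, hu] <;> ring
  have hE : ∀ i, (omitE l i / 12) ^ 3 = u i * (omitE v i / 12) ^ 3 := by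
    intro i
    fin_cases i <;> simp [omitE, quarticE, omitPair, h, hu] <;> ring
  have hu' : (∏ i, t i) ^ 24 = ∏ i, u i := by
    simp only [Fin.prod_univ_five, hu]
    simp
    ring
  simp only [hD, hE, hu', ← bval_mul]

/-! ### The `B_k` on quintics with roots `∞, 0, x, y, z` -/

/-- The roots `∞, 0, x, y, z` in homogeneous coordinates. -/
def sliceRoots (x y z : ℂ) : Fin 5 → Fin 2 → ℂ := ![![1, 0], ![0, 1], ![x, 1], ![y, 1], ![z, 1]]

/-- The coefficients of the quintic with roots `∞, 0, x, y, z`. -/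
def sliceCoeffs (x y z : ℂ) : Fin 6 → ℂ :=
  ![0, -1, x + y + z, -(x * y + y * z + z * x), x * y * z, 0]

lemma quinticOf_sliceRoots (x y z : ℂ) :
    quinticOf (sliceRoots x y z) = formOf (sliceCoeffs x y z) := by
  refine MvPolynomial.funext fun w => ?_
  simp [quinticOf, formOf, Fin.prod_univ_five, Fin.sum_univ_six, lin, sliceRoots, sliceCoeffs]
  ring

lemma inv_sliceCoeffs (x y z : ℂ) :
    invJ (bOf (sliceCoeffs x y z)) = slJ (x + y + z) (x * y + y * z + z * x) (x * y * z) ∧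
    invK (bOf (sliceCoeffs x y z)) = slK (x + y + z) (x * y + y * z + z * x) (x * y * z) ∧
    invL (bOf (sliceCoeffs x y z)) = slL (x + y + z) (x * y + y * z + z * x) (x * y * z) := by
  have hb : bOf (sliceCoeffs x y z) =
      ![0, -2, x + y + z, -(x * y + y * z + z * x), 2 * (x * y * z), 0] := by
    funext i
    fin_cases i <;> simp [bOf, bw, sliceCoeffs]
  rw [hb]
  generalize x + y + z = e1
  generalize x * y + y * z + z * x = e2
  generalize x * y * z = e3
  refine ⟨?_, ?_, ?_⟩
  · simp [invJ, covA, covB, covC, slJ]; ring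
  · simp [invK, covA, covB, covC, can0, can1, can2, can3, det3, slK]; ring
  · simp [invL, covA, covB, covC, can0, can1, can2, can3, det3, slL]; ring

/-- The discriminants `d` and the values `s` of `12 S` of the five quartics, for roots
`∞, 0, x, y, z`, combined as they occur in `bval` and written in the elementary symmetric functions
of `x, y, z`. -/
lemma slice_values (x y z : ℂ) (e1 e2 e3 : ℂ) (he1 : e1 = x + y + z)
    (he2 : e2 = x * y + y * z + z * x) (he3 : e3 = x * y * z) (d s : Fin 5 → ℂ)
    (hd : d = omitD (sliceRoots x y z)) (hs : s = omitE (sliceRoots x y z)) :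
    d 0 = slD e1 e2 e3 * e3 ^ 2 ∧ d 1 = slD e1 e2 e3 ∧ s 0 = sl1 e1 e2 e3 ∧ s 1 = sl2 e1 e2 e3 ∧
    d 2 * d 3 * d 4 = slD e1 e2 e3 * e3 ^ 4 ∧
    d 2 * d 3 * s 4 ^ 3 + d 2 * s 3 ^ 3 * d 4 + s 2 ^ 3 * d 3 * d 4 = slQ e1 e2 e3 ∧
    d 2 * s 3 ^ 3 * s 4 ^ 3 + s 2 ^ 3 * d 3 * s 4 ^ 3 + s 2 ^ 3 * s 3 ^ 3 * d 4 = slP e1 e2 e3 ∧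
    s 2 * s 3 * s 4 = slN e1 e2 e3 := by
  have hd0 : d 0 = (x * y * z * ((x - y) * (y - z) * (z - x))) ^ 2 := by
    simp [hd, omitD, quarticD, omitPair, br, sliceRoots]; ring
  have hd1 : d 1 = ((x - y) * (y - z) * (z - x)) ^ 2 := by
    simp [hd, omitD, quarticD, omitPair, br, sliceRoots]; ring
  have hd2 : d 2 = ((y - z) * z * y) ^ 2 := by
    simp [hd, omitD, quarticD, omitPair, br, sliceRoots]
  have hd3 : d 3 = ((x - z) * z * x) ^ 2 := by
    simp [hd, omitD, quarticD, omitPair, br, sliceRoots]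
  have hd4 : d 4 = ((x - y) * y * x) ^ 2 := by
    simp [hd, omitD, quarticD, omitPair, br, sliceRoots]
  have hs0 : s 0 = (x * (y - z)) ^ 2 + x * (y - z) * (y * (z - x)) + (y * (z - x)) ^ 2 := by
    simp [hs, omitE, quarticE, omitPair, br, sliceRoots]
  have hs1 : s 1 = (y - z) ^ 2 + (y - z) * (z - x) + (z - x) ^ 2 := by
    simp [hs, omitE, quarticE, omitPair, br, sliceRoots]
  have hs2 : s 2 = y ^ 2 - y * z + z ^ 2 := by
    simp [hs, omitE, quarticE, omitPair, br, sliceRoots]; ring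
  have hs3 : s 3 = x ^ 2 - x * z + z ^ 2 := by
    simp [hs, omitE, quarticE, omitPair, br, sliceRoots]; ring
  have hs4 : s 4 = x ^ 2 - x * y + y ^ 2 := by
    simp [hs, omitE, quarticE, omitPair, br, sliceRoots]; ring
  simp only [hd0, hd1, hd2, hd3, hd4, hs0, hs1, hs2, hs3, hs4, he1, he2, he3]
  clear hd hs hd0 hd1 hd2 hd3 hd4 hs0 hs1 hs2 hs3 hs4
  refine ⟨?_, ?_, ?_, ?_, ?_, ?_, ?_, ?_⟩
  · simp only [slD]; ring
  · simp only [slD]; ring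
  · simp only [sl1]; ring
  · simp only [sl2]; ring
  · simp only [slD]; ring
  · simp only [slQ]; ring
  · simp only [slP]; ring
  · simp only [slN]; ring

/-- Scaling by `6912 = 12³ · 4 = 256 · 27` clears the denominators `256` and `12³`. -/
lemma slice_Binv (x y z : ℂ) (d s : Fin 5 → ℂ)
    (hd : d = omitD (sliceRoots x y z)) (hs : s = omitE (sliceRoots x y z)) (k : Fin 6) :
    6912 ^ 5 * Binv (sliceRoots x y z) (k : ℕ) =
      bval (fun i => 27 * d i) (fun i => 4 * s i ^ 3) k := by
  have h := bval_mul (fun _ => 6912) (fun i => omitD (sliceRoots x y z) i / 256)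
    (fun i => (omitE (sliceRoots x y z) i / 12) ^ 3) k
  rw [← Binv_eq] at h
  simp only [Finset.prod_const, Finset.card_univ, Fintype.card_fin] at h
  rw [← h, hd, hs]
  congr 1 <;> (funext i; ring)

/-- The theorem for quintics with roots `∞, 0, x, y, z`. -/
lemma exists_slice {P : MvPolynomial (Fin 6) ℂ} (hP : P.IsHomogeneous 48)
    (hinv : IsInvariantPoly P) : ∃ c : Fin 6 → Fin 6 → ℂ, ∀ x y z : ℂ,
      eval (sliceCoeffs x y z) P = ∑ i : Fin 6, ∑ j ∈ Finset.Ici i,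
        c i j * (Binv (sliceRoots x y z) (i : ℕ) * Binv (sliceRoots x y z) (j : ℕ)) := by
  obtain ⟨S, r, hS, hr⟩ := exists_JKL_homogeneous hP hinv
  let B : Fin 6 → ℂ × ℂ × ℂ → ℂ := fun k w => 6912 ^ 5 * Binv (sliceRoots w.1 w.2.1 w.2.2) (k : ℕ)
  let J : ℂ × ℂ × ℂ → ℂ := fun w => invJ (bOf (sliceCoeffs w.1 w.2.1 w.2.2))
  let K : ℂ × ℂ × ℂ → ℂ := fun w => invK (bOf (sliceCoeffs w.1 w.2.1 w.2.2))
  let L : ℂ × ℂ × ℂ → ℂ := fun w => invL (bOf (sliceCoeffs w.1 w.2.1 w.2.2))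
  have hmem : (fun w => ∑ m ∈ S, r m * (J w ^ m 0 * K w ^ m 1 * L w ^ m 2)) ∈
      Submodule.span ℂ (Set.range B) * Submodule.span ℂ (Set.range B) := by
    have e : (fun w => ∑ m ∈ S, r m * (J w ^ m 0 * K w ^ m 1 * L w ^ m 2)) =
        ∑ m ∈ S, r m • fun w => J w ^ m 0 * K w ^ m 1 * L w ^ m 2 := by
      funext w
      simp
    rw [e]
    refine Submodule.sum_mem _ fun m hm => Submodule.smul_mem _ _ ?_
    refine monomial_mem_mul B J K L ?_ ?_ ?_ ?_ ?_ ?_ _ _ _ (hS m hm)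
    all_goals
      rintro ⟨x, y, z⟩
      obtain ⟨hJ, hK, hL⟩ := inv_sliceCoeffs x y z
      obtain ⟨e1, he1⟩ : ∃ e1, e1 = x + y + z := ⟨_, rfl⟩
      obtain ⟨e2, he2⟩ : ∃ e2, e2 = x * y + y * z + z * x := ⟨_, rfl⟩
      obtain ⟨e3, he3⟩ : ∃ e3, e3 = x * y * z := ⟨_, rfl⟩
      obtain ⟨d, hd⟩ : ∃ d, d = omitD (sliceRoots x y z) := ⟨_, rfl⟩
      obtain ⟨s, hs⟩ : ∃ s, s = omitE (sliceRoots x y z) := ⟨_, rfl⟩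
      have hB := slice_Binv x y z d s hd hs
      obtain ⟨h1, h2, h3, h4, h5, h6, h7, h8⟩ := slice_values x y z e1 e2 e3 he1 he2 he3 d s hd hs
      rw [← he1, ← he2, ← he3] at hJ hK hL
      simp only [B, J, K, L, hJ, hK, hL, hB]
    · rw [← slice0, ← h5]
      simp only [bval, Matrix.cons_val, h1, h2, h3, h4]; ring
    · rw [← slice1, ← h5, ← h6]
      simp only [bval, Matrix.cons_val, h1, h2, h3, h4]; ring
    · rw [← slice2, ← h5, ← h6, ← h7]
      simp only [bval, Matrix.cons_val, h1, h2, h3, h4]; ring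
    · rw [← slice3, ← h6, ← h7, ← h8]
      simp only [bval, Matrix.cons_val, h1, h2, h3, h4]; ring
    · rw [← slice4, ← h7, ← h8]
      simp only [bval, Matrix.cons_val, h1, h2, h3, h4]; ring
    · rw [← slice5, ← h8]
      simp only [bval, Matrix.cons_val, h1, h2, h3, h4]; ring
  obtain ⟨c, hc⟩ := exists_of_mem_mul B hmem
  refine ⟨fun i j => c i j * (6912 ^ 5 * 6912 ^ 5), fun x y z => ?_⟩
  rw [hr, hc (x, y, z)]
  refine Finset.sum_congr rfl fun i _ => Finset.sum_congr rfl fun j _ => ?_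
  simp only [B]
  ring

/-! ### General quintics -/

open Filter Topology

lemma lin_smul (t : ℂ) (v : Fin 2 → ℂ) : lin (t • v) = C t * lin v := by
  simp [lin]; ring

lemma actSL_lin (g : Matrix.SpecialLinearGroup (Fin 2) ℂ) (v : Fin 2 → ℂ) :
    actSL g (lin v) = lin (g.1.mulVec v) := by
  refine MvPolynomial.funext fun x => ?_
  simp [actSL, lin, Fin.sum_univ_two, Matrix.SpecialLinearGroup.coe_inv, Matrix.adjugate_fin_two,
    Matrix.mulVec, dotProduct]
  ring

lemma actSL_quinticOf (g : Matrix.SpecialLinearGroup (Fin 2) ℂ) (v : Fin 5 → Fin 2 → ℂ) :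
    actSL g (quinticOf v) = quinticOf fun i => g.1.mulVec (v i) := by
  simp only [quinticOf, ← actSL_lin]
  simp only [actSL, map_prod]

lemma quinticOf_smul (t : Fin 5 → ℂ) (v : Fin 5 → Fin 2 → ℂ) :
    quinticOf (fun i => t i • v i) = C (∏ i, t i) * quinticOf v := by
  simp only [quinticOf, lin_smul, Finset.prod_mul_distrib, map_prod]

lemma qcoeffs_C_mul (t : ℂ) (F : P2) : qcoeffs (C t * F) = t • qcoeffs F := by
  funext i
  simp [qcoeffs, mcoeff_C_mul]

lemma br_smul_mulVec (g : Matrix.SpecialLinearGroup (Fin 2) ℂ) (t u : ℂ) (v w : Fin 2 → ℂ) :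
    br (t • g.1.mulVec v) (u • g.1.mulVec w) = t * u * br v w := by
  have h := g.2
  rw [Matrix.det_fin_two] at h
  simp only [br, Pi.smul_apply, smul_eq_mul, Matrix.mulVec, dotProduct, Fin.sum_univ_two]
  linear_combination t * u * (v 0 * w 1 - v 1 * w 0) * h

/-- If the first root differs from the others, a matrix of `SL₂(ℂ)` and rescaling of the roots bring
the first two roots to `∞` and `0`. -/
lemma exists_slice_rep (l : Fin 5 → Fin 2 → ℂ) (h1 : br (l 0) (l 1) ≠ 0)
    (h2 : br (l 0) (l 2) ≠ 0) (h3 : br (l 0) (l 3) ≠ 0) (h4 : br (l 0) (l 4) ≠ 0) :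
    ∃ (g : Matrix.SpecialLinearGroup (Fin 2) ℂ) (t : Fin 5 → ℂ) (x y z : ℂ),
      l = fun i => t i • g.1.mulVec (sliceRoots x y z i) := by
  obtain ⟨m, hm⟩ : ∃ m, m = br (l 0) (l 1) := ⟨_, rfl⟩
  have hm0 : m ≠ 0 := hm ▸ h1
  have key : ∀ v : Fin 2 → ℂ, br (l 0) v ≠ 0 → v = br (l 0) v •
      Matrix.mulVec !![l 0 0, l 1 0 / m; l 0 1, l 1 1 / m] ![br v (l 1) / (m * br (l 0) v), 1] := by
    intro v hv
    obtain ⟨q, hq⟩ : ∃ q, q = br (l 0) v := ⟨_, rfl⟩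
    rw [← hq] at hv ⊢
    funext i
    fin_cases i <;> simp [Matrix.mulVec, dotProduct, Fin.sum_univ_two] <;> field_simp <;>
      simp only [br, hq, hm] <;> ring
  refine ⟨⟨!![l 0 0, l 1 0 / m; l 0 1, l 1 1 / m], ?_⟩,
    ![1, m, br (l 0) (l 2), br (l 0) (l 3), br (l 0) (l 4)],
    br (l 2) (l 1) / (m * br (l 0) (l 2)), br (l 3) (l 1) / (m * br (l 0) (l 3)),
    br (l 4) (l 1) / (m * br (l 0) (l 4)), ?_⟩
  · rw [Matrix.det_fin_two_of]
    field_simp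
    rw [hm, br]
    ring
  · funext i
    fin_cases i
    · funext j
      fin_cases j <;> simp [sliceRoots, Matrix.mulVec, dotProduct]
    · funext j
      fin_cases j <;> simp [sliceRoots, Matrix.mulVec, dotProduct] <;> field_simp
    · exact key _ h2
    · exact key _ h3
    · exact key _ h4

/-- The theorem for quintics whose first root differs from the others: both sides are multiplied by
`(∏ t_i)⁴⁸` under rescaling of the roots. -/
lemma exists_generic {P : MvPolynomial (Fin 6) ℂ} (hP : P.IsHomogeneous 48)
    (hinv : IsInvariantPoly P) : ∃ c : Fin 6 → Fin 6 → ℂ, ∀ l : Fin 5 → Fin 2 → ℂ,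
      br (l 0) (l 1) ≠ 0 → br (l 0) (l 2) ≠ 0 → br (l 0) (l 3) ≠ 0 → br (l 0) (l 4) ≠ 0 →
      eval (qcoeffs (quinticOf l)) P
        = ∑ i : Fin 6, ∑ j ∈ Finset.Ici i, c i j * (Binv l (i : ℕ) * Binv l (j : ℕ)) := by
  obtain ⟨c, hc⟩ := exists_slice hP hinv
  refine ⟨c, fun l h1 h2 h3 h4 => ?_⟩
  obtain ⟨g, t, x, y, z, rfl⟩ := exists_slice_rep l h1 h2 h3 h4
  rw [quinticOf_smul, ← actSL_quinticOf, qcoeffs_C_mul, eval_smul_of_homogeneous hP,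
    quinticOf_sliceRoots, hinv, hc, Finset.mul_sum]
  refine Finset.sum_congr rfl fun i _ => ?_
  rw [Finset.mul_sum]
  refine Finset.sum_congr rfl fun j _ => ?_
  have hb := Binv_scale (l := fun i => t i • g.1.mulVec (sliceRoots x y z i))
    (v := sliceRoots x y z) (t := t) fun i j => br_smul_mulVec _ _ _ _ _
  rw [hb, hb]
  ring

lemma continuous_coeff_mul {Y : Type*} [TopologicalSpace Y] {f g : Y → P2}
    (hf : ∀ m, Continuous fun y => coeff m (f y)) (hg : ∀ m, Continuous fun y => coeff m (g y))
    (m : Fin 2 →₀ ℕ) : Continuous fun y => coeff m (f y * g y) := by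
  simp only [coeff_mul]
  exact continuous_finset_sum _ fun p _ => (hf p.1).mul (hg p.2)

lemma continuous_coeff_lin (m : Fin 2 →₀ ℕ) :
    Continuous fun v : Fin 2 → ℂ => coeff m (lin v) := by
  simp only [lin, coeff_sub, coeff_C_mul]
  fun_prop

lemma continuous_eval_quinticOf (P : MvPolynomial (Fin 6) ℂ) :
    Continuous fun l : Fin 5 → Fin 2 → ℂ => eval (qcoeffs (quinticOf l)) P := by
  have h : ∀ m, Continuous fun l : Fin 5 → Fin 2 → ℂ => coeff m (quinticOf l) := by
    have h1 : ∀ (i : Fin 5) m, Continuous fun l : Fin 5 → Fin 2 → ℂ => coeff m (lin (l i)) :=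
      fun i m => (continuous_coeff_lin m).comp (continuous_apply i)
    simp only [quinticOf, Fin.prod_univ_five]
    exact continuous_coeff_mul (continuous_coeff_mul (continuous_coeff_mul
      (continuous_coeff_mul (h1 0) (h1 1)) (h1 2)) (h1 3)) (h1 4)
  exact (MvPolynomial.continuous_eval P).comp (continuous_pi fun i => h _)

lemma continuous_Binv (k : Fin 6) : Continuous fun l : Fin 5 → Fin 2 → ℂ => Binv l (k : ℕ) := by
  have hp : ∀ i, Continuous fun l : Fin 5 → Fin 2 → ℂ => omitPair l i := by
    intro i
    fin_cases i <;> simp only [omitPair, br, Matrix.cons_val] <;> fun_prop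
  have hD : ∀ i, Continuous fun l : Fin 5 → Fin 2 → ℂ => omitD l i := by
    intro i
    have := hp i
    simp only [omitD, quarticD]
    fun_prop
  have hE : ∀ i, Continuous fun l : Fin 5 → Fin 2 → ℂ => omitE l i := by
    intro i
    have := hp i
    simp only [omitE, quarticE]
    fun_prop
  simp only [Binv_eq]
  fin_cases k <;> simp [bval] <;> fun_prop

/-- The perturbed bracket is a monic quadratic polynomial in `ε`, so it has finitely many zeros. -/
lemma eventually_br_ne_zero (v w : Fin 2 → ℂ) :
    ∀ᶠ ε : ℂ in 𝓝[≠] 0, br (v + ε • ![1, 0]) (w + ε • ![0, 1]) ≠ 0 := by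
  let p : Polynomial ℂ := Polynomial.X ^ 2 + Polynomial.C (v 0 + w 1) * Polynomial.X
    + Polynomial.C (br v w)
  have hp : p ≠ 0 := by
    intro h
    have := congrArg (fun q => Polynomial.coeff q 2) h
    simp [p, Polynomial.coeff_X, Polynomial.coeff_C] at this
  have hfin : {ε : ℂ | p.IsRoot ε}.Finite := Polynomial.finite_setOf_isRoot hp
  filter_upwards [nhdsNE_le_cofinite 0 hfin.compl_mem_cofinite] with ε hε h
  refine hε ?_
  simp only [Set.mem_setOf_eq, Polynomial.IsRoot, p]
  rw [← h]
  simp [br]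
  ring

/-- The `21` polynomials `BᵢBⱼ`, `0 ≤ i ≤ j ≤ 5`, linearly span the space of
`SL₂(ℂ)`-invariant homogeneous polynomials of degree `48` in the coefficients of
the binary quintic. -/
theorem binv_products_span_degree48 (P : MvPolynomial (Fin 6) ℂ)
    (hP : P.IsHomogeneous 48) (hinv : IsInvariantPoly P) :
    ∃ c : Fin 6 → Fin 6 → ℂ, ∀ l : Fin 5 → Fin 2 → ℂ,
      MvPolynomial.eval (qcoeffs (quinticOf l)) P
        = ∑ i : Fin 6, ∑ j ∈ Finset.Ici i, c i j * (Binv l (i : ℕ) * Binv l (j : ℕ)) := by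
  obtain ⟨c, hc⟩ := exists_generic hP hinv
  refine ⟨c, fun l => ?_⟩
  -- Generic perturbation of `l` moving the first root off the others; both sides are continuous.
  let path : ℂ → Fin 5 → Fin 2 → ℂ := fun ε i => l i + ε • if i = 0 then ![1, 0] else ![0, 1]
  have hpath : Continuous path := by
    refine continuous_pi fun i => ?_
    simp only [path]
    fun_prop
  have hl : path 0 = l := by
    funext i
    simp only [path, zero_smul, add_zero]
  have hR : Continuous fun l : Fin 5 → Fin 2 → ℂ =>
      ∑ i : Fin 6, ∑ j ∈ Finset.Ici i, c i j * (Binv l (i : ℕ) * Binv l (j : ℕ)) :=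
    continuous_finset_sum _ fun i _ => continuous_finset_sum _ fun j _ =>
      continuous_const.mul ((continuous_Binv i).mul (continuous_Binv j))
  have h1 := (((continuous_eval_quinticOf P).comp hpath).tendsto 0).mono_left
    (nhdsWithin_le_nhds (s := {0}ᶜ))
  have h2 := ((hR.comp hpath).tendsto 0).mono_left (nhdsWithin_le_nhds (s := {0}ᶜ))
  have h := tendsto_nhds_unique_of_eventuallyEq h1 h2 ?_
  · simpa only [Function.comp_apply, hl] using h
  filter_upwards [eventually_br_ne_zero (l 0) (l 1), eventually_br_ne_zero (l 0) (l 2),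
    eventually_br_ne_zero (l 0) (l 3), eventually_br_ne_zero (l 0) (l 4)] with ε e1 e2 e3 e4
  exact hc (path ε) e1 e2 e3 e4

end
end
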